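/- Let α, β ∈ ℝ with β ≠ 0 and such that 1, α, α² are linearly independent over ℚ, and let g : ℤ → ℤ be given by g(n) = ⌊β·n·⌊α·n⌉⌉. Then the first-order theory of the structure (ℤ; <, +, g) is undecidable; that is, the set of sentences of the first-order language with one binary relation symbol <, one binary function symbol +, and one unary function symbol g that are true in ℤ (with the standard order and addition, and g interpreted as above) is not a computable set of sentences (under an effective encoding of sentences). -/

import Mathlib

/-!
STATEMENT 0: Let α, β ∈ ℝ with β ≠ 0 and 1, α, α² linearly independent over ℚ, and
g : ℤ → ℤ given by g(n) = ⌊β·n·⌊α·n⌉⌉ (nearest integers). Then the first-order theory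
of (ℤ; <, +, g) is undecidable.
-/

open FirstOrder Language

namespace Stmt0

/-- The language with one binary relation `<`, one binary function `+`,
and one unary function `g`. -/
def L : Language :=
  ⟨fun n => match n with | 1 => Unit | 2 => Unit | _ => Empty,
   fun n => match n with | 2 => Unit | _ => Empty⟩

instance instEncF : (n : ℕ) → Encodable (L.Functions n)
  | 0 => inferInstanceAs (Encodable Empty)
  | 1 => inferInstanceAs (Encodable Unit)
  | 2 => inferInstanceAs (Encodable Unit)
  | (_ + 3) => inferInstanceAs (Encodable Empty)

instance instEncR : (n : ℕ) → Encodable (L.Relations n)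
  | 0 => inferInstanceAs (Encodable Empty)
  | 1 => inferInstanceAs (Encodable Empty)
  | 2 => inferInstanceAs (Encodable Unit)
  | (_ + 3) => inferInstanceAs (Encodable Empty)

/-- Partial inverse to `BoundedFormula.listEncode` on sentences. -/
def decodeSentence
    (l : List ((Σ k, L.Term (Empty ⊕ Fin k)) ⊕ ((Σ n, L.Relations n) ⊕ ℕ))) :
    Option L.Sentence :=
  (BoundedFormula.listDecode l)[0]?.bind
    (fun x => if h : x.1 = 0 then
      some (cast (congrArg (L.BoundedFormula Empty) h) x.2) else none)

/-- An effective encoding of sentences (via their encodings as lists of symbols). -/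
instance instEncSentence : Encodable L.Sentence :=
  Encodable.ofLeftInjection
    (fun φ => BoundedFormula.listEncode φ)
    decodeSentence
    (fun φ => by
      have h := BoundedFormula.listDecode_encode_list (L := L) (α := Empty) [⟨0, φ⟩]
      rw [List.flatMap_singleton] at h
      have h' : BoundedFormula.listDecode (BoundedFormula.listEncode φ) =
          [⟨0, φ⟩] := h
      simp [decodeSentence, h'])

/-- The structure on ℤ interpreting `<`, `+` and `g`. -/
def S (g : ℤ → ℤ) : L.Structure ℤ where
  funMap {n} f x :=
    match n, f with
    | 1, _ => g (x 0)
    | 2, _ => x 0 + x 1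
  RelMap {n} r x :=
    match n, r with
    | 2, _ => x 0 < x 1

/-- The first-order theory of (ℤ; <, +, g), as a set of codes of sentences. -/
def theoryCodes (g : ℤ → ℤ) : Set ℕ :=
  {c | ∃ φ : L.Sentence, Encodable.encode φ = c ∧ @Sentence.Realize L ℤ (S g) φ}

/-! ### Definability layer -/

/-- The symbol `<`. -/
def ltSym : L.Relations 2 := (() : Unit)
/-- The symbol `+`. -/
def addSym : L.Functions 2 := (() : Unit)
/-- The symbol `g`. -/
def gSym : L.Functions 1 := (() : Unit)

/-- First-order definable (without parameters) predicates of tuples. -/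
def Dfb (g : ℤ → ℤ) {ι : Type} (P : (ι → ℤ) → Prop) : Prop :=
  ∃ φ : L.Formula ι, ∀ v, @Formula.Realize L ℤ (S g) ι φ v ↔ P v

section
variable {g : ℤ → ℤ} {ι κ : Type}

theorem Dfb.congr {P Q : (ι → ℤ) → Prop} (h : Dfb g P) (e : ∀ v, P v ↔ Q v) : Dfb g Q := by
  obtain ⟨φ, hφ⟩ := h
  exact ⟨φ, fun v => (hφ v).trans (e v)⟩

theorem Dfb.not {P : (ι → ℤ) → Prop} (h : Dfb g P) : Dfb g (fun v => ¬ P v) := by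
  obtain ⟨φ, hφ⟩ := h
  let _ := S g
  refine ⟨φ.not, fun v => ?_⟩
  rw [Formula.realize_not, hφ]

theorem Dfb.imp {P Q : (ι → ℤ) → Prop} (h : Dfb g P) (h' : Dfb g Q) :
    Dfb g (fun v => P v → Q v) := by
  obtain ⟨φ, hφ⟩ := h
  obtain ⟨ψ, hψ⟩ := h'
  let _ := S g
  refine ⟨φ.imp ψ, fun v => ?_⟩
  rw [Formula.realize_imp, hφ, hψ]

theorem Dfb.or {P Q : (ι → ℤ) → Prop} (h : Dfb g P) (h' : Dfb g Q) :
    Dfb g (fun v => P v ∨ Q v) :=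
  (h.not.imp h').congr fun v => by tauto

theorem Dfb.and {P Q : (ι → ℤ) → Prop} (h : Dfb g P) (h' : Dfb g Q) :
    Dfb g (fun v => P v ∧ Q v) :=
  (h.imp h'.not).not.congr fun v => by tauto

theorem Dfb.iff {P Q : (ι → ℤ) → Prop} (h : Dfb g P) (h' : Dfb g Q) :
    Dfb g (fun v => P v ↔ Q v) :=
  ((h.imp h').and (h'.imp h)).congr fun v => by tauto

theorem Dfb.relabel {P : (ι → ℤ) → Prop} (h : Dfb g P) (σ : ι → κ) :
    Dfb g (fun v : κ → ℤ => P (fun i => v (σ i))) := by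
  obtain ⟨φ, hφ⟩ := h
  let _ := S g
  refine ⟨Formula.relabel σ φ, fun v => ?_⟩
  rw [Formula.realize_relabel, hφ]
  rfl

theorem Dfb.ex {P : (ι → ℤ) → ℤ → Prop}
    (h : Dfb g (fun w : Option ι → ℤ => P (fun i => w (some i)) (w none))) :
    Dfb g (fun v => ∃ x, P v x) := by
  obtain ⟨φ, hφ⟩ := h.relabel (fun o : Option ι => (o.elim (Sum.inr ()) Sum.inl : ι ⊕ Unit))
  let _ := S g
  refine ⟨φ.iExs Unit, fun v => ?_⟩
  rw [Formula.realize_iExs]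
  constructor
  · rintro ⟨i, hi⟩
    exact ⟨_, (hφ _).1 hi⟩
  · rintro ⟨x, hx⟩
    exact ⟨fun _ => x, (hφ _).2 hx⟩

theorem Dfb.all {P : (ι → ℤ) → ℤ → Prop}
    (h : Dfb g (fun w : Option ι → ℤ => P (fun i => w (some i)) (w none))) :
    Dfb g (fun v => ∀ x, P v x) :=
  (Dfb.ex (P := fun v x => ¬ P v x) h.not).not.congr fun v => by simp

/-- Definable functions. -/
def DfbF (g : ℤ → ℤ) {ι : Type} (f : (ι → ℤ) → ℤ) : Prop :=
  Dfb g (fun w : Option ι → ℤ => w none = f (fun i => w (some i)))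

theorem Dfb.eq_var (i j : ι) : Dfb g (fun v : ι → ℤ => v i = v j) := by
  let _ := S g
  refine ⟨Term.equal (Term.var i) (Term.var j), fun v => ?_⟩
  rw [Formula.realize_equal]
  rfl

theorem Dfb.lt_var (i j : ι) : Dfb g (fun v : ι → ℤ => v i < v j) := by
  let _ := S g
  refine ⟨Relations.formula ltSym ![Term.var i, Term.var j], fun v => ?_⟩
  rw [Formula.realize_rel]
  rfl

theorem Dfb.add_var (i j k : ι) : Dfb g (fun v : ι → ℤ => v i = v j + v k) := by
  let _ := S g
  refine ⟨Term.equal (Term.var i)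
    (Term.func addSym ![Term.var j, Term.var k]), fun v => ?_⟩
  rw [Formula.realize_equal]
  rfl

theorem Dfb.g_var (i j : ι) : Dfb g (fun v : ι → ℤ => v i = g (v j)) := by
  let _ := S g
  refine ⟨Term.equal (Term.var i)
    (Term.func gSym ![Term.var j]), fun v => ?_⟩
  rw [Formula.realize_equal]
  rfl

theorem DfbF.var (i : ι) : DfbF g (fun v : ι → ℤ => v i) := Dfb.eq_var _ _

/-- Weakening of functions into a larger context. -/
theorem DfbF.weak {f : (ι → ℤ) → ℤ} (h : DfbF g f) (σ : ι → κ) :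
    DfbF g (fun w : κ → ℤ => f (fun i => w (σ i))) :=
  (Dfb.relabel h (Option.map σ)).congr fun _ => Iff.rfl

theorem Dfb.eqF {f : (ι → ℤ) → ℤ} (h : DfbF g f) (i : ι) : Dfb g (fun v => v i = f v) :=
  (Dfb.relabel h (fun o : Option ι => o.elim i id)).congr fun _ => Iff.rfl

theorem Dfb.comp₁ {R : ℤ → Prop} (hR : Dfb g (fun v : Fin 1 → ℤ => R (v 0)))
    {f : (ι → ℤ) → ℤ} (hf : DfbF g f) : Dfb g (fun v => R (f v)) := by
  refine Dfb.congr (P := fun v => ∃ x, x = f v ∧ R x) ?_ (fun v => by simp)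
  exact Dfb.ex (Dfb.and hf (hR.relabel (fun _ => none)))

theorem Dfb.comp₂ {R : ℤ → ℤ → Prop} (hR : Dfb g (fun v : Fin 2 → ℤ => R (v 0) (v 1)))
    {f₁ f₂ : (ι → ℤ) → ℤ} (h₁ : DfbF g f₁) (h₂ : DfbF g f₂) :
    Dfb g (fun v => R (f₁ v) (f₂ v)) := by
  refine Dfb.congr (P := fun v => ∃ x, x = f₁ v ∧ ∃ y, y = f₂ v ∧ R x y) ?_ (fun v => by simp)
  refine Dfb.ex (Dfb.and h₁ (Dfb.ex (Dfb.and (h₂.weak some) ?_)))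
  exact hR.relabel ![some none, none]

theorem Dfb.comp₃ {R : ℤ → ℤ → ℤ → Prop}
    (hR : Dfb g (fun v : Fin 3 → ℤ => R (v 0) (v 1) (v 2)))
    {f₁ f₂ f₃ : (ι → ℤ) → ℤ} (h₁ : DfbF g f₁) (h₂ : DfbF g f₂) (h₃ : DfbF g f₃) :
    Dfb g (fun v => R (f₁ v) (f₂ v) (f₃ v)) := by
  refine Dfb.congr (P := fun v => ∃ x, x = f₁ v ∧ ∃ y, y = f₂ v ∧ ∃ z, z = f₃ v ∧ R x y z) ?_
    (fun v => by simp)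
  refine Dfb.ex (Dfb.and h₁ (Dfb.ex (Dfb.and (h₂.weak some) (Dfb.ex (Dfb.and
    ((h₃.weak some).weak some) ?_)))))
  exact hR.relabel ![some (some none), some none, none]

theorem Dfb.lt {f₁ f₂ : (ι → ℤ) → ℤ} (h₁ : DfbF g f₁) (h₂ : DfbF g f₂) :
    Dfb g (fun v => f₁ v < f₂ v) := Dfb.comp₂ (R := fun x y => x < y) (Dfb.lt_var 0 1) h₁ h₂

theorem Dfb.eq {f₁ f₂ : (ι → ℤ) → ℤ} (h₁ : DfbF g f₁) (h₂ : DfbF g f₂) :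
    Dfb g (fun v => f₁ v = f₂ v) := Dfb.comp₂ (R := fun x y => x = y) (Dfb.eq_var 0 1) h₁ h₂

theorem Dfb.le {f₁ f₂ : (ι → ℤ) → ℤ} (h₁ : DfbF g f₁) (h₂ : DfbF g f₂) :
    Dfb g (fun v => f₁ v ≤ f₂ v) := (Dfb.lt h₂ h₁).not.congr fun v => by simp

theorem DfbF.add {f₁ f₂ : (ι → ℤ) → ℤ} (h₁ : DfbF g f₁) (h₂ : DfbF g f₂) :
    DfbF g (fun v => f₁ v + f₂ v) :=
  Dfb.comp₃ (R := fun x y z => x = y + z) (Dfb.add_var 0 1 2) (DfbF.var none)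
    (h₁.weak some) (h₂.weak some)

theorem DfbF.sub {f₁ f₂ : (ι → ℤ) → ℤ} (h₁ : DfbF g f₁) (h₂ : DfbF g f₂) :
    DfbF g (fun v => f₁ v - f₂ v) :=
  (Dfb.comp₃ (R := fun x y z => x = y + z) (Dfb.add_var 0 1 2) 
    (h₁.weak some) (h₂.weak some) (DfbF.var none)).congr fun v => by
      constructor <;> intro h <;> linarith

theorem DfbF.zero : DfbF g (fun _ : ι → ℤ => 0) :=
  (Dfb.add_var (none : Option ι) none none).congr fun v => by
      constructor <;> intro h <;> linarith

theorem DfbF.neg {f : (ι → ℤ) → ℤ} (h : DfbF g f) : DfbF g (fun v => - f v) :=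
  (DfbF.zero.sub h).congr fun v => by simp

theorem DfbF.one : DfbF g (fun _ : ι → ℤ => 1) := by
  refine Dfb.congr (P := fun v : Option ι → ℤ => 0 < v none ∧ ∀ y, 0 < y → v none ≤ y) ?_ ?_
  · exact (Dfb.lt DfbF.zero (DfbF.var _)).and
      (Dfb.all ((Dfb.lt DfbF.zero (DfbF.var _)).imp (Dfb.le (DfbF.var _) (DfbF.var _))))
  · intro v
    constructor
    · rintro ⟨h, h'⟩
      have := h' 1 (by norm_num)
      change v none = 1
      omega
    · intro h
      change v none = 1 at h
      rw [h]
      exact ⟨by norm_num, fun y hy => by omega⟩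

theorem DfbF.nat (n : ℕ) : DfbF g (fun _ : ι → ℤ => (n : ℤ)) := by
  induction n with
  | zero => exact DfbF.zero.congr fun v => by simp
  | succ n ih => exact (ih.add DfbF.one).congr fun v => by simp

theorem DfbF.int (n : ℤ) : DfbF g (fun _ : ι → ℤ => n) := by
  rcases Int.eq_nat_or_neg n with ⟨k, rfl | rfl⟩
  · exact DfbF.nat k
  · exact (DfbF.nat k).neg

theorem DfbF.natmul (n : ℕ) {f : (ι → ℤ) → ℤ} (h : DfbF g f) :
    DfbF g (fun v => (n : ℤ) * f v) := by
  induction n with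
  | zero => exact DfbF.zero.congr fun v => by simp
  | succ n ih => exact (ih.add h).congr fun v => by simp [add_mul]

theorem DfbF.intmul (n : ℤ) {f : (ι → ℤ) → ℤ} (h : DfbF g f) : DfbF g (fun v => n * f v) := by
  rcases Int.eq_nat_or_neg n with ⟨k, rfl | rfl⟩
  · exact h.natmul k
  · exact (h.natmul k).neg.congr fun v => by simp

theorem DfbF.g' {f : (ι → ℤ) → ℤ} (h : DfbF g f) : DfbF g (fun v => g (f v)) :=
  Dfb.comp₂ (R := fun x y => x = g y) (Dfb.g_var 0 1) (DfbF.var none) (h.weak some)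

theorem DfbF.comp₁ {F : ℤ → ℤ} (hF : DfbF g (fun v : Fin 1 → ℤ => F (v 0)))
    {f : (ι → ℤ) → ℤ} (h : DfbF g f) : DfbF g (fun v => F (f v)) := by
  have : Dfb g (fun v : Fin 2 → ℤ => v 0 = F (v 1)) :=
    hF.relabel (fun o => o.elim 0 (fun _ => 1))
  exact Dfb.comp₂ (R := fun x y => x = F y) this (DfbF.var none) (h.weak some)

end

/-! ### Definability over the naturals -/

/-- Predicates of tuples of naturals that are definable in the integer structure. -/
def DN (g : ℤ → ℤ) {ι : Type} (P : (ι → ℕ) → Prop) : Prop :=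
  ∃ P' : (ι → ℤ) → Prop, Dfb g P' ∧ ∀ u : ι → ℕ, P' (fun i => (u i : ℤ)) ↔ P u

/-- Multiplication is definable. -/
def MulDef (g : ℤ → ℤ) : Prop := Dfb g (fun v : Fin 3 → ℤ => v 2 = v 0 * v 1)

section
variable {g : ℤ → ℤ} {ι κ : Type}

theorem DN.congr {P Q : (ι → ℕ) → Prop} (h : DN g P) (e : ∀ v, P v ↔ Q v) : DN g Q := by
  obtain ⟨P', h1, h2⟩ := h
  exact ⟨P', h1, fun u => (h2 u).trans (e u)⟩

theorem DN.not {P : (ι → ℕ) → Prop} (h : DN g P) : DN g (fun v => ¬ P v) := by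
  obtain ⟨P', h1, h2⟩ := h
  exact ⟨_, h1.not, fun u => not_congr (h2 u)⟩

theorem DN.imp {P Q : (ι → ℕ) → Prop} (h : DN g P) (h' : DN g Q) :
    DN g (fun v => P v → Q v) := by
  obtain ⟨P', h1, h2⟩ := h
  obtain ⟨Q', h1', h2'⟩ := h'
  exact ⟨_, h1.imp h1', fun u => imp_congr (h2 u) (h2' u)⟩

theorem DN.or {P Q : (ι → ℕ) → Prop} (h : DN g P) (h' : DN g Q) :
    DN g (fun v => P v ∨ Q v) :=
  (h.not.imp h').congr fun v => by tauto

theorem DN.and {P Q : (ι → ℕ) → Prop} (h : DN g P) (h' : DN g Q) :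
    DN g (fun v => P v ∧ Q v) :=
  (h.imp h'.not).not.congr fun v => by tauto

theorem DN.relabel {P : (ι → ℕ) → Prop} (h : DN g P) (σ : ι → κ) :
    DN g (fun v : κ → ℕ => P (fun i => v (σ i))) := by
  obtain ⟨P', h1, h2⟩ := h
  exact ⟨_, h1.relabel σ, fun u => h2 _⟩

theorem DN.ex {P : (ι → ℕ) → ℕ → Prop}
    (h : DN g (fun w : Option ι → ℕ => P (fun i => w (some i)) (w none))) :
    DN g (fun v => ∃ x, P v x) := by
  obtain ⟨P', h1, h2⟩ := h
  have key : ∀ (u : ι → ℕ) (x : ℕ),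
      P' (fun o : Option ι => o.elim (x : ℤ) (fun i => (u i : ℤ))) ↔ P u x := by
    intro u x
    refine Iff.trans ?_ (h2 (fun o : Option ι => o.elim x u))
    apply iff_of_eq
    congr 1
    funext o
    cases o <;> rfl
  refine ⟨fun v => ∃ x : ℤ, 0 ≤ x ∧ P' (fun o : Option ι => o.elim x v), ?_, ?_⟩
  · refine Dfb.ex (Dfb.and (Dfb.le DfbF.zero (DfbF.var none)) ?_)
    refine h1.congr fun v => ?_
    apply iff_of_eq
    congr 1
    funext o
    cases o <;> rfl
  · intro u
    constructor
    · rintro ⟨x, hx, h⟩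
      lift x to ℕ using hx
      exact ⟨x, (key u x).1 h⟩
    · rintro ⟨x, h⟩
      exact ⟨x, by positivity, (key u x).2 h⟩

theorem DN.all {P : (ι → ℕ) → ℕ → Prop}
    (h : DN g (fun w : Option ι → ℕ => P (fun i => w (some i)) (w none))) :
    DN g (fun v => ∀ x, P v x) :=
  (DN.ex (P := fun v x => ¬ P v x) h.not).not.congr fun v => by simp

/-- Definable functions on naturals. -/
def DNF (g : ℤ → ℤ) {ι : Type} (f : (ι → ℕ) → ℕ) : Prop :=
  DN g (fun w : Option ι → ℕ => w none = f (fun i => w (some i)))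

theorem DN.eq_var (i j : ι) : DN g (fun v : ι → ℕ => v i = v j) :=
  ⟨_, Dfb.eq_var i j, fun u => by simp⟩

theorem DN.lt_var (i j : ι) : DN g (fun v : ι → ℕ => v i < v j) :=
  ⟨_, Dfb.lt_var i j, fun u => by simp⟩

theorem DN.add_var (i j k : ι) : DN g (fun v : ι → ℕ => v i = v j + v k) :=
  ⟨_, Dfb.add_var i j k, fun u => by beta_reduce; norm_cast⟩

theorem DN.mul_var (hm : MulDef g) (i j k : ι) : DN g (fun v : ι → ℕ => v i = v j * v k) :=
  ⟨_, Dfb.relabel hm ![j, k, i], fun u => by simp; norm_cast⟩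

theorem DNF.var (i : ι) : DNF g (fun v : ι → ℕ => v i) := DN.eq_var _ _

theorem DNF.const (n : ℕ) : DNF g (fun _ : ι → ℕ => n) :=
  ⟨_, Dfb.eq (DfbF.var none) (DfbF.nat n), fun u => by simp⟩

theorem DNF.weak {f : (ι → ℕ) → ℕ} (h : DNF g f) (σ : ι → κ) :
    DNF g (fun w : κ → ℕ => f (fun i => w (σ i))) :=
  (DN.relabel h (Option.map σ)).congr fun _ => Iff.rfl

theorem DN.comp₁ {R : ℕ → Prop} (hR : DN g (fun v : Fin 1 → ℕ => R (v 0)))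
    {f : (ι → ℕ) → ℕ} (hf : DNF g f) : DN g (fun v => R (f v)) := by
  refine DN.congr (P := fun v => ∃ x, x = f v ∧ R x) ?_ (fun v => by simp)
  exact DN.ex (DN.and hf (hR.relabel (fun _ => none)))

theorem DN.comp₂ {R : ℕ → ℕ → Prop} (hR : DN g (fun v : Fin 2 → ℕ => R (v 0) (v 1)))
    {f₁ f₂ : (ι → ℕ) → ℕ} (h₁ : DNF g f₁) (h₂ : DNF g f₂) :
    DN g (fun v => R (f₁ v) (f₂ v)) := by
  refine DN.congr (P := fun v => ∃ x, x = f₁ v ∧ ∃ y, y = f₂ v ∧ R x y) ?_ (fun v => by simp)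
  refine DN.ex (DN.and h₁ (DN.ex (DN.and (h₂.weak some) ?_)))
  exact hR.relabel ![some none, none]

theorem DN.comp₃ {R : ℕ → ℕ → ℕ → Prop}
    (hR : DN g (fun v : Fin 3 → ℕ => R (v 0) (v 1) (v 2)))
    {f₁ f₂ f₃ : (ι → ℕ) → ℕ} (h₁ : DNF g f₁) (h₂ : DNF g f₂) (h₃ : DNF g f₃) :
    DN g (fun v => R (f₁ v) (f₂ v) (f₃ v)) := by
  refine DN.congr (P := fun v => ∃ x, x = f₁ v ∧ ∃ y, y = f₂ v ∧ ∃ z, z = f₃ v ∧ R x y z) ?_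
    (fun v => by simp)
  refine DN.ex (DN.and h₁ (DN.ex (DN.and (h₂.weak some) (DN.ex (DN.and
    ((h₃.weak some).weak some) ?_)))))
  exact hR.relabel ![some (some none), some none, none]

theorem DN.lt {f₁ f₂ : (ι → ℕ) → ℕ} (h₁ : DNF g f₁) (h₂ : DNF g f₂) :
    DN g (fun v => f₁ v < f₂ v) := DN.comp₂ (R := fun x y => x < y) (DN.lt_var 0 1) h₁ h₂

theorem DN.eq {f₁ f₂ : (ι → ℕ) → ℕ} (h₁ : DNF g f₁) (h₂ : DNF g f₂) :
    DN g (fun v => f₁ v = f₂ v) := DN.comp₂ (R := fun x y => x = y) (DN.eq_var 0 1) h₁ h₂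

theorem DNF.add {f₁ f₂ : (ι → ℕ) → ℕ} (h₁ : DNF g f₁) (h₂ : DNF g f₂) :
    DNF g (fun v => f₁ v + f₂ v) :=
  DN.comp₃ (R := fun x y z => x = y + z) (DN.add_var 0 1 2) (DNF.var none)
    (h₁.weak some) (h₂.weak some)

theorem DNF.mul (hm : MulDef g) {f₁ f₂ : (ι → ℕ) → ℕ} (h₁ : DNF g f₁) (h₂ : DNF g f₂) :
    DNF g (fun v => f₁ v * f₂ v) :=
  DN.comp₃ (R := fun x y z => x = y * z) (DN.mul_var hm 0 1 2) (DNF.var none)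
    (h₁.weak some) (h₂.weak some)

theorem DNF.comp₁ {F : ℕ → ℕ} (hF : DN g (fun v : Fin 2 → ℕ => v 0 = F (v 1)))
    {f : (ι → ℕ) → ℕ} (h : DNF g f) : DNF g (fun v => F (f v)) :=
  DN.comp₂ (R := fun x y => x = F y) hF (DNF.var none) (h.weak some)

theorem DNF.comp₂ {F : ℕ → ℕ → ℕ} (hF : DN g (fun v : Fin 3 → ℕ => v 0 = F (v 1) (v 2)))
    {f₁ f₂ : (ι → ℕ) → ℕ} (h₁ : DNF g f₁) (h₂ : DNF g f₂) :
    DNF g (fun v => F (f₁ v) (f₂ v)) :=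
  DN.comp₃ (R := fun x y z => x = F y z) hF (DNF.var none) (h₁.weak some) (h₂.weak some)

theorem DNF.pair (hm : MulDef g) {f₁ f₂ : (ι → ℕ) → ℕ} (h₁ : DNF g f₁) (h₂ : DNF g f₂) :
    DNF g (fun v => Nat.pair (f₁ v) (f₂ v)) := by
  refine DNF.comp₂ ?_ h₁ h₂
  refine DN.congr (P := fun v : Fin 3 → ℕ => (v 1 < v 2 → v 0 = v 2 * v 2 + v 1) ∧
    (¬ v 1 < v 2 → v 0 = v 1 * v 1 + v 1 + v 2)) ?_ ?_
  · exact ((DN.lt_var _ _).imp (DN.eq (DNF.var _) (((DNF.var _).mul hm (DNF.var _)).add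
      (DNF.var _)))).and ((DN.lt_var _ _).not.imp (DN.eq (DNF.var _)
      ((((DNF.var _).mul hm (DNF.var _)).add (DNF.var _)).add (DNF.var _))))
  · intro v
    unfold Nat.pair
    split_ifs with h <;> simp [h]

theorem DNF.unpair₁ (hm : MulDef g) {f : (ι → ℕ) → ℕ} (h : DNF g f) :
    DNF g (fun v => (Nat.unpair (f v)).1) := by
  refine DNF.comp₁ (F := fun x => (Nat.unpair x).1) ?_ h
  refine DN.congr (P := fun v : Fin 2 → ℕ => ∃ y, v 1 = Nat.pair (v 0) y) ?_ ?_
  · exact DN.ex (DN.eq (DNF.var _) (DNF.pair hm (DNF.var _) (DNF.var _)))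
  · intro v
    constructor
    · rintro ⟨y, hy⟩
      rw [hy]; simp
    · intro h
      exact ⟨(Nat.unpair (v 1)).2, by rw [h]; simp⟩

theorem DNF.unpair₂ (hm : MulDef g) {f : (ι → ℕ) → ℕ} (h : DNF g f) :
    DNF g (fun v => (Nat.unpair (f v)).2) := by
  refine DNF.comp₁ (F := fun x => (Nat.unpair x).2) ?_ h
  refine DN.congr (P := fun v : Fin 2 → ℕ => ∃ y, v 1 = Nat.pair y (v 0)) ?_ ?_
  · exact DN.ex (DN.eq (DNF.var _) (DNF.pair hm (DNF.var _) (DNF.var _)))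
  · intro v
    constructor
    · rintro ⟨y, hy⟩
      rw [hy]; simp
    · intro h
      exact ⟨(Nat.unpair (v 1)).1, by rw [h]; simp⟩

theorem DNF.mod (hm : MulDef g) {f₁ f₂ : (ι → ℕ) → ℕ} (h₁ : DNF g f₁) (h₂ : DNF g f₂) :
    DNF g (fun v => f₁ v % (f₂ v + 1)) := by
  refine DNF.comp₂ (F := fun x y => x % (y + 1)) ?_ h₁ h₂
  refine DN.congr (P := fun v : Fin 3 → ℕ => v 0 < v 2 + 1 ∧ ∃ q, v 1 = (v 2 + 1) * q + v 0) ?_ ?_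
  · exact (DN.lt (DNF.var _) ((DNF.var _).add (DNF.const 1))).and (DN.ex (DN.eq (DNF.var _)
      ((DNF.mul hm ((DNF.var _).add (DNF.const 1)) (DNF.var _)).add (DNF.var _))))
  · intro v
    constructor
    · rintro ⟨h, q, hq⟩
      rw [hq, Nat.mul_add_mod, Nat.mod_eq_of_lt h]
    · intro h
      rw [h]
      exact ⟨Nat.mod_lt _ (by omega), v 1 / (v 2 + 1), (Nat.div_add_mod _ _).symm⟩

theorem DNF.beta (hm : MulDef g) {f₁ f₂ : (ι → ℕ) → ℕ} (h₁ : DNF g f₁) (h₂ : DNF g f₂) :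
    DNF g (fun v => Nat.beta (f₁ v) (f₂ v)) :=
  DNF.mod hm (DNF.unpair₁ hm h₁)
    (DNF.mul hm (h₂.add (DNF.const 1)) (DNF.unpair₂ hm h₁))

/-- Graphs of partial recursive functions are definable. -/
def DP (g : ℤ → ℤ) (f : ℕ →. ℕ) : Prop := DN g (fun v : Fin 2 → ℕ => v 1 ∈ f (v 0))

theorem DP.comp {f : ℕ →. ℕ} (hf : DP g f) {f₁ f₂ : (ι → ℕ) → ℕ} (h₁ : DNF g f₁)
    (h₂ : DNF g f₂) : DN g (fun v => f₂ v ∈ f (f₁ v)) :=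
  DN.comp₂ (R := fun x y => y ∈ f x) hf h₁ h₂

theorem prec_iff (f h : ℕ →. ℕ) (a n z : ℕ) :
    (z ∈ (Nat.rec (f a) (fun y IH => IH.bind fun i => h (Nat.pair a (Nat.pair y i))) n : Part ℕ)) ↔
    ∃ c, Nat.beta c 0 ∈ f a ∧ (∀ y, y < n → Nat.beta c (y + 1) ∈
      h (Nat.pair a (Nat.pair y (Nat.beta c y)))) ∧ Nat.beta c n = z := by
  constructor
  · intro hz
    have : ∃ s : ℕ → ℕ, s 0 ∈ f a ∧ (∀ y, y < n → s (y + 1) ∈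
        h (Nat.pair a (Nat.pair y (s y)))) ∧ s n = z := by
      induction n generalizing z with
      | zero => exact ⟨fun _ => z, hz, by simp, rfl⟩
      | succ n ih =>
        obtain ⟨i, hi, hz⟩ := Part.mem_bind_iff.1 hz
        obtain ⟨s, h0, h1, h2⟩ := ih i hi
        refine ⟨fun k => if k ≤ n then s k else z, by simpa using h0, ?_, by simp⟩
        intro y hy
        rcases Nat.lt_succ_iff_lt_or_eq.1 hy with hy | rfl
        · have e1 : y + 1 ≤ n := hy
          have e2 : y ≤ n := hy.le
          simpa [e1, e2] using h1 y hy
        · simpa [h2] using hz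
    obtain ⟨s, h0, h1, h2⟩ := this
    have hb : ∀ k, k ≤ n → Nat.beta (Nat.unbeta ((List.range (n + 1)).map s)) k = s k := by
      intro k hk
      have := Nat.beta_unbeta_coe ((List.range (n + 1)).map s) ⟨k, by simp; omega⟩
      simpa using this
    refine ⟨Nat.unbeta ((List.range (n + 1)).map s), ?_, ?_, ?_⟩
    · rwa [hb 0 (by omega)]
    · intro y hy
      rw [hb _ (by omega), hb _ (by omega)]
      exact h1 y hy
    · rw [hb _ le_rfl, h2]
  · rintro ⟨c, h0, h1, rfl⟩
    induction n with
    | zero => exact h0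
    | succ n ih =>
      exact Part.mem_bind_iff.2 ⟨_, ih fun y hy => h1 y (by omega), h1 n (by omega)⟩

theorem DP.of_partrec (hm : MulDef g) {f : ℕ →. ℕ} (hf : Nat.Partrec f) : DP g f := by
  induction hf with
  | zero =>
    refine (DN.eq (DNF.var 1) (DNF.const 0)).congr fun v => ?_
    exact (Part.mem_some_iff (b := v 1)).symm
  | succ =>
    refine (DN.eq (DNF.var 1) ((DNF.var 0).add (DNF.const 1))).congr fun v => ?_
    exact (Part.mem_some_iff (b := v 1)).symm
  | left =>
    refine (DN.eq (DNF.var 1) (DNF.unpair₁ hm (DNF.var 0))).congr fun v => ?_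
    exact (Part.mem_some_iff (b := v 1)).symm
  | right =>
    refine (DN.eq (DNF.var 1) (DNF.unpair₂ hm (DNF.var 0))).congr fun v => ?_
    exact (Part.mem_some_iff (b := v 1)).symm
  | @pair f h _ _ hf hh =>
    refine DN.congr (P := fun v : Fin 2 → ℕ => ∃ x, ∃ y, (x ∈ f (v 0) ∧ y ∈ h (v 0)) ∧
      v 1 = Nat.pair x y) ?_ fun v => ?_
    · exact DN.ex (DN.ex (((DP.comp hf (DNF.var _) (DNF.var _)).and
        (DP.comp hh (DNF.var _) (DNF.var _))).and
        (DN.eq (DNF.var _) (DNF.pair hm (DNF.var _) (DNF.var _)))))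
    · simp only [Seq.seq, Part.map_eq_map, Part.mem_bind_iff, Part.mem_map_iff]
      constructor
      · rintro ⟨x, y, ⟨hx, hy⟩, e⟩
        exact ⟨_, ⟨x, hx, rfl⟩, y, hy, e.symm⟩
      · rintro ⟨_, ⟨x, hx, rfl⟩, y, hy, e⟩
        exact ⟨x, y, ⟨hx, hy⟩, e.symm⟩
  | @comp f h _ _ hf hh =>
    refine DN.congr (P := fun v : Fin 2 → ℕ => ∃ x, x ∈ h (v 0) ∧ v 1 ∈ f x) ?_ fun v => ?_
    · exact DN.ex ((DP.comp hh (DNF.var _) (DNF.var _)).and (DP.comp hf (DNF.var _) (DNF.var _)))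
    · exact Part.mem_bind_iff.symm
  | @prec f h _ _ hf hh =>
    refine DN.congr (P := fun v : Fin 2 → ℕ => ∃ c, Nat.beta c 0 ∈ f (v 0).unpair.1 ∧
      (∀ y, y < (v 0).unpair.2 → Nat.beta c (y + 1) ∈
      h (Nat.pair (v 0).unpair.1 (Nat.pair y (Nat.beta c y)))) ∧
      Nat.beta c (v 0).unpair.2 = v 1) ?_ fun v => ?_
    · refine DN.ex (DN.and ?_ (DN.and (DN.all (DN.imp ?_ ?_)) ?_))
      · exact DP.comp hf (DNF.unpair₁ hm (DNF.var _)) (DNF.beta hm (DNF.var _) (DNF.const 0))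
      · exact DN.lt (DNF.var _) (DNF.unpair₂ hm (DNF.var _))
      · exact DP.comp hh (DNF.pair hm (DNF.unpair₁ hm (DNF.var _)) (DNF.pair hm (DNF.var _)
          (DNF.beta hm (DNF.var _) (DNF.var _))))
          (DNF.beta hm (DNF.var _) ((DNF.var _).add (DNF.const 1)))
      · exact DN.eq (DNF.beta hm (DNF.var _) (DNF.unpair₂ hm (DNF.var _))) (DNF.var _)
    · exact (prec_iff f h _ _ _).symm
  | @rfind f _ hf =>
    refine DN.congr (P := fun v : Fin 2 → ℕ => 0 ∈ f (Nat.pair (v 0) (v 1)) ∧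
      ∀ y, y < v 1 → ∃ z, z ∈ f (Nat.pair (v 0) y) ∧ 0 < z) ?_ fun v => ?_
    · exact (DP.comp hf (DNF.pair hm (DNF.var _) (DNF.var _)) (DNF.const 0)).and
        (DN.all ((DN.lt (DNF.var _) (DNF.var _)).imp (DN.ex
          ((DP.comp hf (DNF.pair hm (DNF.var _) (DNF.var _)) (DNF.var _)).and
          (DN.lt (DNF.const 0) (DNF.var _))))))
    · refine Iff.trans ?_ Nat.mem_rfind.symm
      simp [Nat.pos_iff_ne_zero, Part.mem_map_iff]

end

/-! ### Reduction of the halting problem -/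

/-- The term `x₀ + (x₀ + (⋯ + x₀))`, with `n + 1` occurrences of `x₀`. -/
def numT : ℕ → L.Term (Empty ⊕ Fin 2)
  | 0 => Term.var (Sum.inr 0)
  | n + 1 => Term.func addSym ![Term.var (Sum.inr 0), numT n]

theorem numT_realize (g : ℤ → ℤ) (n : ℕ) (v : Empty ⊕ Fin 2 → ℤ) (hv : v (Sum.inr 0) = 1) :
    @Term.realize L ℤ (S g) _ v (numT n) = n + 1 := by
  let _ := S g
  induction n with
  | zero => simpa [numT] using hv
  | succ n ih =>
    have : Term.realize v (numT (n + 1)) = v (Sum.inr 0) + Term.realize v (numT n) := rfl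
    rw [this, ih, hv]
    push_cast
    ring

theorem numT_code : Computable (fun n => Encodable.encode (numT n)) := by
  have h : ∃ a b : ℕ, ∀ n, Encodable.encode (numT (n + 1)) =
      Nat.succ (Nat.pair a (Nat.succ (Nat.pair b (Encodable.encode (numT n))))) := by
    refine ⟨Encodable.encode (Sum.inr ⟨2, addSym⟩ : (Empty ⊕ Fin 2) ⊕ (Σ i, L.Functions i)),
      Encodable.encode (Sum.inl (Sum.inr 0) : (Empty ⊕ Fin 2) ⊕ (Σ i, L.Functions i)), ?_⟩
    intro n
    have e : ∀ t : L.Term (Empty ⊕ Fin 2), Encodable.encode t =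
      Encodable.encode t.listEncode := fun t => rfl
    rw [e, e]
    have : (numT (n + 1)).listEncode = (Sum.inr ⟨2, addSym⟩) :: (Sum.inl (Sum.inr 0)) ::
        (numT n).listEncode := by
      simp [numT, Term.listEncode, List.finRange_succ]
    rw [this]
    rfl
  obtain ⟨a, b, h⟩ := h
  have hp : Primrec (fun n : ℕ => (Nat.rec (Encodable.encode (numT 0))
      (fun _ r => Nat.succ (Nat.pair a (Nat.succ (Nat.pair b r)))) n : ℕ)) := by
    refine Primrec.nat_rec₁ _ ?_
    refine Primrec.succ.comp (Primrec₂.natPair.comp (Primrec.const a) (Primrec.succ.comp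
      (Primrec₂.natPair.comp (Primrec.const b) Primrec.snd)))
  refine (hp.of_eq fun n => ?_).to_comp
  induction n with
  | zero => rfl
  | succ n ih => rw [h, ← ih]

/-- The sentence `∀ x₀ x₁, x₁ = (n + 1) x₀ → ψ(x₀, x₁)`. -/
def sent (ψ : L.BoundedFormula Empty 2) (n : ℕ) : L.Sentence :=
  BoundedFormula.all (BoundedFormula.all (BoundedFormula.imp
    (BoundedFormula.equal (Term.var (Sum.inr 1)) (numT n)) ψ))

theorem sent_code (ψ : L.BoundedFormula Empty 2) :
    Computable (fun n => Encodable.encode (sent ψ n)) := by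
  have h : ∃ a b c d : ℕ, ∀ n, Encodable.encode (sent ψ n) =
      Nat.succ (Nat.pair a (Nat.succ (Nat.pair a (Nat.succ (Nat.pair b (Nat.succ (Nat.pair c
      (Nat.succ (Nat.pair (2 * (Nat.pair 2 (Encodable.encode (numT n)))) d))))))))) := by
    refine ⟨Encodable.encode (Sum.inr (Sum.inr 1) : (Σ k, L.Term (Empty ⊕ Fin k)) ⊕
        ((Σ n, L.Relations n) ⊕ ℕ)), Encodable.encode (Sum.inr (Sum.inr 0) :
        (Σ k, L.Term (Empty ⊕ Fin k)) ⊕ ((Σ n, L.Relations n) ⊕ ℕ)),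
      Encodable.encode (Sum.inl ⟨2, Term.var (Sum.inr 1)⟩ :
        (Σ k, L.Term (Empty ⊕ Fin k)) ⊕ ((Σ n, L.Relations n) ⊕ ℕ)),
        Encodable.encode ψ.listEncode, ?_⟩
    intro n
    have e : ∀ t : L.Sentence, Encodable.encode t =
      Encodable.encode (BoundedFormula.listEncode t) := fun t => rfl
    rw [e]
    rfl
  obtain ⟨a, b, c, d, h⟩ := h
  have hp : Primrec (fun r : ℕ => Nat.succ (Nat.pair a (Nat.succ (Nat.pair a
      (Nat.succ (Nat.pair b (Nat.succ (Nat.pair c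
      (Nat.succ (Nat.pair (2 * (Nat.pair 2 r)) d)))))))))) := by
    have hk : ∀ (k : ℕ) {f : ℕ → ℕ}, Primrec f → Primrec (fun r => Nat.succ (Nat.pair k (f r))) :=
      fun k f hf => Primrec.succ.comp (Primrec₂.natPair.comp (Primrec.const k) hf)
    refine hk _ (hk _ (hk _ (hk _ ?_)))
    refine Primrec.succ.comp (Primrec₂.natPair.comp ?_ (Primrec.const d))
    exact Primrec.nat_mul.comp (Primrec.const 2)
      (Primrec₂.natPair.comp (Primrec.const 2) Primrec.id)
  exact (hp.to_comp.comp numT_code).of_eq fun n => (h n).symm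

theorem sent_realize (g : ℤ → ℤ) {P : (Fin 2 → ℤ) → Prop} (hP : Dfb g P) :
    ∃ ψ : L.BoundedFormula Empty 2, ∀ n : ℕ, @Sentence.Realize L ℤ (S g) (sent ψ n) ↔
      ∀ x y : ℤ, @Term.realize L ℤ (S g) _ (Sum.elim default ![x, y]) (numT n) = y → P ![x, y] := by
  obtain ⟨φ, hφ⟩ := hP
  let _ := S g
  refine ⟨BoundedFormula.relabel (n := 2) (k := 0) (fun i : Fin 2 => Sum.inr i) φ, fun n => ?_⟩
  unfold Sentence.Realize Formula.Realize sent
  have key : ∀ x y : ℤ, (Fin.snoc (Fin.snoc default x) y : Fin 2 → ℤ) = ![x, y] := by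
    intro x y
    funext i
    fin_cases i <;> rfl
  refine forall_congr' fun x => forall_congr' fun y => ?_
  rw [BoundedFormula.realize_imp]
  have h1 : ∀ d : Empty → ℤ, BoundedFormula.Realize (L := L) (M := ℤ) (BoundedFormula.relabel (n := 2) (k := 0)
      (fun i : Fin 2 => Sum.inr i) φ) d
      (Fin.snoc (Fin.snoc default x) y : Fin 2 → ℤ) ↔ P ![x, y] := by
    intro d
    rw [key, BoundedFormula.realize_relabel, ← hφ]
    unfold Formula.Realize
    apply iff_of_eq
    congr 1
    funext i
    exact i.elim0
  have h2 : ∀ d : Empty → ℤ, BoundedFormula.Realize (L := L) (M := ℤ)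
      (BoundedFormula.equal (Term.var (Sum.inr 1)) (numT n)) d
      (Fin.snoc (Fin.snoc default x) y : Fin 2 → ℤ) ↔
      Term.realize (Sum.elim default ![x, y]) (numT n) = y := by
    intro d
    rw [key, Subsingleton.elim d default]
    exact ⟨fun h => h.symm, fun h => h.symm⟩
  exact imp_congr (h2 _) (h1 _)

theorem undecidable_of_mul {g : ℤ → ℤ} (hm : MulDef g) :
    ¬ ComputablePred (fun c => c ∈ theoryCodes g) := by
  intro hc
  apply ComputablePred.halting_problem 0
  have hf : Nat.Partrec (fun k : ℕ => Nat.Partrec.Code.eval (Denumerable.ofNat Nat.Partrec.Code k) 0) := by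
    refine Partrec.nat_iff.1 ?_
    exact Nat.Partrec.Code.eval_part.comp (Computable.ofNat _) (Computable.const 0)
  have hD : DN g (fun v : Fin 1 → ℕ => ∃ y, y ∈ Nat.Partrec.Code.eval (Denumerable.ofNat _ (v 0)) 0) :=
    DN.ex (DP.comp (DP.of_partrec hm hf) (DNF.var _) (DNF.var _))
  obtain ⟨P', h1, h2⟩ := hD
  have h3 : Dfb g (fun v : Fin 2 → ℤ => v 0 = 1 → P' (fun _ => v 1 - 1)) := by
    refine (Dfb.eq (DfbF.var _) DfbF.one).imp ?_
    refine Dfb.comp₁ (R := fun x => P' (fun _ => x)) ?_ ((DfbF.var _).sub DfbF.one)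
    refine h1.congr fun v => ?_
    apply iff_of_eq
    congr 1
    funext i
    rw [Subsingleton.elim i 0]
  obtain ⟨ψ, hψ⟩ := sent_realize g h3
  have h4 : ∀ c : Nat.Partrec.Code, (Nat.Partrec.Code.eval c 0).Dom ↔
      Encodable.encode (sent ψ (Encodable.encode c)) ∈ theoryCodes g := by
    intro c
    have h5 : Encodable.encode (sent ψ (Encodable.encode c)) ∈ theoryCodes g ↔
        @Sentence.Realize L ℤ (S g) (sent ψ (Encodable.encode c)) := by
      constructor
      · rintro ⟨φ, e, h⟩
        rwa [← Encodable.encode_injective e]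
      · intro h
        exact ⟨_, rfl, h⟩
    rw [h5, hψ, Part.dom_iff_mem]
    have h6 := h2 (fun _ => Encodable.encode c)
    simp only [Denumerable.ofNat_encode] at h6
    rw [← h6]
    constructor
    · intro h x y hxy hx
      have hx : x = 1 := hx
      rw [numT_realize _ _ _ (by simpa using hx)] at hxy
      have : (![x, y] : Fin 2 → ℤ) 1 - 1 = (Encodable.encode c : ℕ) := by
        simp [← hxy]
      rw [this]
      exact h
    · intro h
      have := h 1 (Encodable.encode c + 1) (numT_realize _ _ _ (by simp)) rfl
      simpa using this
  have h7 : ComputablePred (fun c : Nat.Partrec.Code =>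
      Encodable.encode (sent ψ (Encodable.encode c)) ∈ theoryCodes g) := by
    obtain ⟨p, hp, e⟩ := ComputablePred.computable_iff.1 hc
    exact ComputablePred.computable_iff.2 ⟨fun c => p (Encodable.encode (sent ψ (Encodable.encode c))),
      hp.comp ((sent_code ψ).comp Computable.encode), by
        funext c
        exact congrFun e _⟩
  exact h7.of_eq fun c => (h4 c).symm

/-! ### Density -/

section Density

open Filter Topology

/-- Integer form of linear independence of `1, α, α²`. -/
def Ind (α : ℝ) : Prop := ∀ a b c : ℤ, (a : ℝ) + b * α + c * α ^ 2 = 0 → a = 0 ∧ b = 0 ∧ c = 0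

variable {α : ℝ}

theorem Ind.of_linearIndependent (h : LinearIndependent ℚ ![(1 : ℝ), α, α ^ 2]) : Ind α := by
  intro a b c e
  rw [Fintype.linearIndependent_iff] at h
  have := h ![(a : ℚ), b, c] (by
    simp [Fin.sum_univ_three, Rat.smul_def]
    linarith)
  have h0 := this 0
  have h1 := this 1
  have h2 := this 2
  simp at h0 h1 h2
  exact ⟨h0, h1, h2⟩

theorem kron0 (h : Ind α) (t δ : ℝ) (hδ : 0 < δ) : ∃ x p : ℤ, |α * x - p - t| < δ := by
  let A : AddSubgroup ℝ :=
    { carrier := {s | ∃ x p : ℤ, s = α * x - p}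
      zero_mem' := ⟨0, 0, by simp⟩
      add_mem' := by
        rintro _ _ ⟨x, p, rfl⟩ ⟨y, q, rfl⟩
        exact ⟨x + y, p + q, by push_cast; ring⟩
      neg_mem' := by
        rintro _ ⟨x, p, rfl⟩
        exact ⟨-x, -p, by push_cast; ring⟩ }
  rcases A.dense_or_cyclic with hd | ⟨c, hc⟩
  · obtain ⟨s, hs, ⟨x, p, rfl⟩⟩ := Metric.dense_iff.1 hd t δ hδ
    exact ⟨x, p, by rwa [Metric.mem_ball, Real.dist_eq] at hs⟩
  · exfalso
    have h1 : (1 : ℝ) ∈ A := ⟨0, -1, by simp⟩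
    have h2 : α ∈ A := ⟨1, 0, by simp⟩
    rw [hc, AddSubgroup.mem_closure_singleton] at h1 h2
    obtain ⟨k, hk⟩ := h1
    obtain ⟨l, hl⟩ := h2
    simp only [zsmul_eq_mul] at hk hl
    have := h (-l) k 0 (by
      push_cast
      linear_combination (-(l : ℝ)) * hk * (-1) + (k : ℝ) * hl * (-1))
    obtain ⟨-, rfl, -⟩ := this
    simp at hk

/-- Dirichlet with arbitrarily small error. -/
theorem diri (α δ : ℝ) (hδ : 0 < δ) : ∃ x p : ℤ, 0 < x ∧ |α * x - p| < δ := by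
  obtain ⟨n, hn⟩ := exists_nat_gt (1 / δ)
  have hn0 : (0 : ℝ) < n := lt_trans (by positivity) hn
  obtain ⟨j, k, hk, -, hjk⟩ := Real.exists_int_int_abs_mul_sub_le α (n := n) (by exact_mod_cast hn0)
  refine ⟨k, j, hk, ?_⟩
  rw [mul_comm]
  refine hjk.trans_lt ?_
  rw [div_lt_iff₀ (by positivity)]
  rw [div_lt_iff₀ hδ] at hn
  nlinarith

/-- One-dimensional density, with `z` large. -/
theorem kron1 (h : Ind α) (t δ : ℝ) (hδ : 0 < δ) (Z : ℤ) :
    ∃ z p : ℤ, Z ≤ z ∧ |α * z - p - t| < δ := by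
  obtain ⟨x, p, hx⟩ := kron0 h t (δ / 2) (by positivity)
  let M : ℤ := |Z| + |x|
  have hM : 0 ≤ M := by positivity
  have hM' : (0 : ℝ) ≤ M := by exact_mod_cast hM
  obtain ⟨k, q, hk, hkq⟩ := diri α (δ / (2 * (M + 1))) (by positivity)
  refine ⟨x + M * k, p + M * q, ?_, ?_⟩
  · have h1 : M ≤ M * k := by nlinarith
    have h2 := neg_abs_le x
    have h3 := le_abs_self Z
    have h4 : M = |Z| + |x| := rfl
    linarith
  · have e : α * ((x + M * k : ℤ) : ℝ) - ((p + M * q : ℤ) : ℝ) - t =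
        (α * x - p - t) + M * (α * k - q) := by
      push_cast
      ring
    rw [e]
    refine (abs_add_le _ _).trans_lt ?_
    rw [abs_mul, abs_of_nonneg hM']
    rw [lt_div_iff₀ (by positivity)] at hkq
    have := abs_nonneg (α * k - q)
    nlinarith

/-- The group generated by `(α, α²)` and `ℤ²`. -/
def Gam (α : ℝ) : AddSubgroup (ℝ × ℝ) where
  carrier := {v | ∃ x p q : ℤ, v = (α * x - p, α ^ 2 * x - q)}
  zero_mem' := ⟨0, 0, 0, by ext <;> simp⟩
  add_mem' := by
    rintro _ _ ⟨x, p, q, rfl⟩ ⟨y, p', q', rfl⟩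
    exact ⟨x + y, p + p', q + q', by ext <;> simp <;> ring⟩
  neg_mem' := by
    rintro _ ⟨x, p, q, rfl⟩
    exact ⟨-x, -p, -q, by ext <;> simp <;> ring⟩

/-- A closed subgroup with nonzero short vectors contains a line. -/
theorem exists_line (H : AddSubgroup (ℝ × ℝ)) (hH : IsClosed (H : Set (ℝ × ℝ)))
    (v : ℕ → ℝ × ℝ) (hv : ∀ n, v n ∈ H) (h0 : ∀ n, v n ≠ 0) (hl : Tendsto v atTop (𝓝 0)) :
    ∃ d : ℝ × ℝ, d ≠ 0 ∧ ∀ t : ℝ, t • d ∈ H := by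
  have hs : ∀ n, ‖v n‖⁻¹ • v n ∈ Metric.sphere (0 : ℝ × ℝ) 1 := by
    intro n
    rw [mem_sphere_zero_iff_norm, norm_smul, norm_inv, norm_norm]
    exact inv_mul_cancel₀ (norm_ne_zero_iff.2 (h0 n))
  obtain ⟨d, hd, φ, hφ, hlim⟩ := (isCompact_sphere (0 : ℝ × ℝ) 1).tendsto_subseq hs
  refine ⟨d, ?_, fun t => ?_⟩
  · rintro rfl
    simp at hd
  · have hn : Tendsto (fun n => ‖v (φ n)‖) atTop (𝓝 0) := by
      have := (hl.comp hφ.tendsto_atTop).norm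
      simpa using this
    have h1 : Tendsto (fun n => (⌊t / ‖v (φ n)‖⌋ : ℝ) * ‖v (φ n)‖) atTop (𝓝 t) := by
      have h2 : Tendsto (fun n => t - ‖v (φ n)‖) atTop (𝓝 t) := by
        simpa using tendsto_const_nhds.sub hn
      refine tendsto_of_tendsto_of_tendsto_of_le_of_le h2 tendsto_const_nhds ?_ ?_
      · intro n
        have hp : 0 < ‖v (φ n)‖ := norm_pos_iff.2 (h0 _)
        have h3 := (Int.lt_floor_add_one (t / ‖v (φ n)‖)).le
        rw [div_le_iff₀ hp] at h3
        simp only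
        linarith
      · intro n
        have hp : 0 < ‖v (φ n)‖ := norm_pos_iff.2 (h0 _)
        have h3 := Int.floor_le (t / ‖v (φ n)‖)
        rwa [le_div_iff₀ hp] at h3
    have h3 := h1.smul hlim
    refine hH.mem_of_tendsto h3 (Eventually.of_forall fun n => ?_)
    have hp : ‖v (φ n)‖ ≠ 0 := norm_ne_zero_iff.2 (h0 _)
    have e : ((⌊t / ‖v (φ n)‖⌋ : ℝ) * ‖v (φ n)‖) • ((fun n => ‖v n‖⁻¹ • v n) ∘ φ) n =
        ⌊t / ‖v (φ n)‖⌋ • v (φ n) := by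
      simp only [Function.comp]
      rw [smul_smul, mul_assoc, mul_inv_cancel₀ hp, mul_one]
      exact Int.cast_smul_eq_zsmul _ _ _
    rw [e]
    exact H.zsmul_mem (hv _) _

theorem kron2_aux (h : Ind α) (s : ℝ) : ((0, s) : ℝ × ℝ) ∈ (Gam α).topologicalClosure := by
  set H := (Gam α).topologicalClosure with hHdef
  have hH : IsClosed (H : Set (ℝ × ℝ)) := AddSubgroup.isClosed_topologicalClosure _
  have hle : Gam α ≤ H := AddSubgroup.le_topologicalClosure _
  let u : ℕ → ℝ × ℝ := fun n => (Int.fract (α * n), Int.fract (α ^ 2 * n))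
  have hu : ∀ n, u n ∈ Metric.closedBall (0 : ℝ × ℝ) 1 := by
    intro n
    rw [mem_closedBall_zero_iff, Prod.norm_def]
    refine max_le ?_ ?_
    · rw [Real.norm_eq_abs, abs_of_nonneg (Int.fract_nonneg _)]
      exact (Int.fract_lt_one _).le
    · rw [Real.norm_eq_abs, abs_of_nonneg (Int.fract_nonneg _)]
      exact (Int.fract_lt_one _).le
  obtain ⟨a, -, φ, hφ, hlim⟩ := (isCompact_closedBall (0 : ℝ × ℝ) 1).tendsto_subseq hu
  have hv : ∀ n, u (φ (n + 1)) - u (φ n) ∈ Gam α := by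
    intro n
    refine ⟨φ (n + 1) - φ n, ⌊α * φ (n + 1)⌋ - ⌊α * φ n⌋, ⌊α ^ 2 * φ (n + 1)⌋ - ⌊α ^ 2 * φ n⌋, ?_⟩
    ext
    · simp only [u, Int.fract, Prod.fst_sub, Prod.snd_sub]
      push_cast
      ring
    · simp only [u, Int.fract, Prod.fst_sub, Prod.snd_sub]
      push_cast
      ring
  have h0 : ∀ n, u (φ (n + 1)) - u (φ n) ≠ 0 := by
    intro n e
    have e1 := congrArg Prod.fst e
    simp only [u, Int.fract, Prod.fst_sub, Prod.fst_zero] at e1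
    have := h (⌊α * φ n⌋ - ⌊α * φ (n + 1)⌋) (φ (n + 1) - φ n) 0 (by
      push_cast
      linarith)
    have h1 := hφ (Nat.lt_succ_self n)
    have h2 := this.2.1
    simp only [Nat.succ_eq_add_one] at h1
    omega
  have hlim0 : Tendsto (fun n => u (φ (n + 1)) - u (φ n)) atTop (𝓝 0) := by
    have h1 : Tendsto (fun n => u (φ (n + 1))) atTop (𝓝 a) := hlim.comp (tendsto_add_atTop_nat 1)
    have h2 : Tendsto (fun n => u (φ n)) atTop (𝓝 a) := hlim
    simpa using h1.sub h2
  obtain ⟨d, hd0, hd⟩ := exists_line H hH _ (fun n => hle (hv n)) h0 hlim0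
  by_cases hd1 : d.1 = 0
  · have hd2 : d.2 ≠ 0 := fun e => hd0 (Prod.ext hd1 e)
    have := hd (s / d.2)
    convert this using 1
    ext
    · simp [hd1]
    · simp [hd2]
  · set r := d.2 / d.1 with hr
    have hline : ∀ t : ℝ, ((t, t * r) : ℝ × ℝ) ∈ H := by
      intro t
      convert hd (t / d.1) using 1
      ext
      · simp [hd1]
      · simp [hr]
        ring
    let A : AddSubgroup ℝ := H.comap (AddMonoidHom.inr ℝ ℝ)
    have hA : ∀ s, s ∈ A ↔ ((0, s) : ℝ × ℝ) ∈ H := fun s => Iff.rfl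
    have hAc : IsClosed (A : Set ℝ) := hH.preimage (by fun_prop : Continuous fun s : ℝ => ((0, s) : ℝ × ℝ))
    rw [← hA]
    rcases A.dense_or_cyclic with hdn | ⟨c, hc⟩
    · have := hdn s
      rwa [hAc.closure_eq] at this
    · exfalso
      have h1 : (1 : ℝ) ∈ A := (hA _).2 (hle ⟨0, 0, -1, by simp⟩)
      have h2 : r ∈ A := by
        rw [hA]
        have := H.sub_mem (hline 1) (hle ⟨0, -1, 0, rfl⟩)
        simpa using this
      have h3 : α ^ 2 - α * r ∈ A := by
        rw [hA]
        have := H.sub_mem (hle ⟨1, 0, 0, rfl⟩) (hline α)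
        simpa using this
      rw [hc, AddSubgroup.mem_closure_singleton] at h1 h2 h3
      obtain ⟨k, hk⟩ := h1
      obtain ⟨l, hl⟩ := h2
      obtain ⟨m, hm⟩ := h3
      simp only [zsmul_eq_mul] at hk hl hm
      have := h (-m) (-l) k (by
        push_cast
        have e1 : (l : ℝ) = k * r := by rw [← hl]; linear_combination (-(l : ℝ)) * hk
        have e2 : (m : ℝ) = k * (α ^ 2 - α * r) := by rw [← hm]; linear_combination (-(m : ℝ)) * hk
        rw [e1, e2]
        ring)
      obtain ⟨-, -, rfl⟩ := this
      simp at hk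

/-- Two-dimensional density. -/
theorem kron2 (h : Ind α) (t δ : ℝ) (hδ : 0 < δ) :
    ∃ x p q : ℤ, |α * x - p| < δ ∧ |α ^ 2 * x - q - t| < δ := by
  have := kron2_aux h t
  have := Metric.mem_closure_iff.1 this δ hδ
  obtain ⟨_, ⟨x, p, q, rfl⟩, hd⟩ := this
  rw [Prod.dist_eq, max_lt_iff] at hd
  refine ⟨x, p, q, ?_, ?_⟩
  · have := hd.1
    rw [dist_comm, Real.dist_eq] at this
    simpa using this
  · have := hd.2
    rwa [dist_comm, Real.dist_eq] at this

end Density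

/-! ### Distance to the nearest integer -/

section Er

/-- Nearest integer to `α n`. -/
noncomputable def pr (α : ℝ) (n : ℤ) : ℤ := round (α * n)

/-- Signed distance from `α n` to the nearest integer. -/
noncomputable def er (α : ℝ) (n : ℤ) : ℝ := α * n - pr α n

variable {α : ℝ}

theorem er_ge (n : ℤ) : -(1 / 2) ≤ er α n := by
  unfold er pr
  rw [round_eq]
  have := Int.floor_le (α * n + 1 / 2)
  linarith

theorem er_lt (n : ℤ) : er α n < 1 / 2 := by
  unfold er pr
  rw [round_eq]
  have := Int.lt_floor_add_one (α * n + 1 / 2)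
  linarith

theorem er_abs (n : ℤ) : |er α n| ≤ 1 / 2 := abs_le.2 ⟨er_ge n, (er_lt n).le⟩

theorem er_spec (n : ℤ) : α * n = pr α n + er α n := by
  unfold er
  ring

theorem pr_unique {n p : ℤ} (h1 : -(1 / 2) ≤ α * n - p) (h2 : α * n - p < 1 / 2) :
    pr α n = p := by
  unfold pr
  rw [round_eq, Int.floor_eq_iff]
  constructor <;> linarith

theorem er_unique {n p : ℤ} (h1 : -(1 / 2) ≤ α * n - p) (h2 : α * n - p < 1 / 2) :
    er α n = α * n - p := by
  unfold er
  rw [pr_unique h1 h2]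

/-- Adding with a carry `c`. -/
theorem pr_add_c {n m : ℤ} (c : ℤ) (h1 : -(1 / 2) ≤ er α n + er α m - c)
    (h2 : er α n + er α m - c < 1 / 2) : pr α (n + m) = pr α n + pr α m + c := by
  have e : α * ((n + m : ℤ) : ℝ) - ((pr α n + pr α m + c : ℤ) : ℝ) = er α n + er α m - c := by
    push_cast
    unfold er
    ring
  apply pr_unique <;> rw [e] <;> assumption

theorem er_add_c {n m : ℤ} (c : ℤ) (h1 : -(1 / 2) ≤ er α n + er α m - c)
    (h2 : er α n + er α m - c < 1 / 2) : er α (n + m) = er α n + er α m - c := by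
  have := pr_add_c c h1 h2
  unfold er at *
  rw [this]
  push_cast
  ring

theorem pr_add {n m : ℤ} (h1 : -(1 / 2) ≤ er α n + er α m)
    (h2 : er α n + er α m < 1 / 2) : pr α (n + m) = pr α n + pr α m := by
  have := pr_add_c (α := α) (n := n) (m := m) 0 (by simpa using h1) (by simpa using h2)
  simpa using this

theorem er_add {n m : ℤ} (h1 : -(1 / 2) ≤ er α n + er α m)
    (h2 : er α n + er α m < 1 / 2) : er α (n + m) = er α n + er α m := by
  have := er_add_c (α := α) (n := n) (m := m) 0 (by simpa using h1) (by simpa using h2)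
  simpa using this

theorem er_sub {n m : ℤ} (h1 : -(1 / 2) ≤ er α n - er α m)
    (h2 : er α n - er α m < 1 / 2) : er α (n - m) = er α n - er α m := by
  have e : α * ((n - m : ℤ) : ℝ) - ((pr α n - pr α m : ℤ) : ℝ) = er α n - er α m := by
    push_cast
    unfold er
    ring
  rw [← e] at h1 h2
  rw [er_unique h1 h2, e]

/-- All carries are in `{-1, 0, 1}`. -/
theorem er_add_cases (n m : ℤ) :
    (er α (n + m) = er α n + er α m ∧ -(1 / 2) ≤ er α n + er α m ∧ er α n + er α m < 1 / 2) ∨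
    (er α (n + m) = er α n + er α m - 1 ∧ 1 / 2 ≤ er α n + er α m) ∨
    (er α (n + m) = er α n + er α m + 1 ∧ er α n + er α m < -(1 / 2)) := by
  have h1 := er_ge (α := α) n
  have h2 := er_lt (α := α) n
  have h3 := er_ge (α := α) m
  have h4 := er_lt (α := α) m
  rcases lt_or_ge (er α n + er α m) (-(1 / 2)) with h | h
  · right; right
    refine ⟨?_, h⟩
    have := er_add_c (α := α) (n := n) (m := m) (-1) (by push_cast; linarith) (by push_cast; linarith)
    rw [this]
    push_cast
    ring
  · rcases lt_or_ge (er α n + er α m) (1 / 2) with h' | h'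
    · left
      exact ⟨er_add h h', h, h'⟩
    · right; left
      refine ⟨?_, h'⟩
      have := er_add_c (α := α) (n := n) (m := m) 1 (by push_cast; linarith) (by push_cast; linarith)
      rw [this]
      push_cast
      ring

theorem er_ne_zero (h : Ind α) {n : ℤ} (hn : n ≠ 0) : er α n ≠ 0 := by
  intro e
  unfold er at e
  have := h (-pr α n) n 0 (by
    push_cast
    linarith)
  exact hn this.2.1

theorem exists_er (h : Ind α) {a b : ℝ} (hab : a < b) (ha : -(1 / 2) ≤ a) (hb : b ≤ 1 / 2) (Z : ℤ) :
    ∃ z, Z ≤ z ∧ a < er α z ∧ er α z < b := by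
  obtain ⟨z, p, hz, hp⟩ := kron1 h ((a + b) / 2) ((b - a) / 2) (by linarith) Z
  rw [abs_lt] at hp
  have e : er α z = α * z - p := er_unique (by linarith) (by linarith)
  exact ⟨z, hz, by rw [e]; linarith, by rw [e]; linarith⟩

theorem exists_er2 (h : Ind α) {t δ : ℝ} (ht : |t| < 1 / 2) (hδ : 0 < δ) :
    ∃ x, |er α x| < δ ∧ |er α (pr α x) - t| < δ := by
  have hα := abs_nonneg α
  let η := min δ (1 / 2 - |t|)
  have hη : 0 < η := lt_min hδ (by linarith)
  have hη1 : η ≤ δ := min_le_left _ _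
  have hη2 : η ≤ 1 / 2 - |t| := min_le_right _ _
  have hpos : 0 < η / (1 + |α|) := by positivity
  have hle : η / (1 + |α|) ≤ η := by
    rw [div_le_iff₀ (by positivity)]
    nlinarith
  obtain ⟨x, p, q, h1, h2⟩ := kron2 h t (η / (1 + |α|)) hpos
  have htn := abs_nonneg t
  have h1' := abs_lt.1 h1
  have hp : pr α x = p := pr_unique (by linarith) (by linarith)
  have he : er α x = α * x - p := er_unique (by linarith) (by linarith)
  have h3 : |α * p - q - t| < η := by
    have e : α * p - q - t = (α ^ 2 * x - q - t) - α * (α * x - p) := by ring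
    rw [e]
    refine (abs_sub _ _).trans_lt ?_
    rw [abs_mul]
    have : |α| * |α * x - p| ≤ |α| * (η / (1 + |α|)) := by gcongr
    have e2 : η / (1 + |α|) + |α| * (η / (1 + |α|)) = η := by field_simp
    linarith
  have h4 := abs_lt.1 h3
  have h5 := abs_le.1 (le_refl |t|)
  have he' : er α p = α * p - q := er_unique (by linarith) (by linarith)
  refine ⟨x, ?_, ?_⟩
  · rw [he]
    linarith
  · rw [hp, he']
    linarith

end Er

/-! ### Coarsely definable scalar multiplications -/

section Scal

variable {g : ℤ → ℤ}

/-- Multiplication by the real number `c` is definable up to a bounded error. -/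
def Scal (g : ℤ → ℤ) (c : ℝ) : Prop :=
  ∃ R : ℤ → ℤ → Prop, Dfb g (fun v : Fin 2 → ℤ => R (v 0) (v 1)) ∧ ∃ C : ℕ,
    (∀ n, ∃ y, R n y) ∧ ∀ n y, R n y → |(y : ℝ) - c * n| ≤ C

theorem Scal.int (k : ℤ) : Scal g k := by
  refine ⟨fun n y => y = k * n, Dfb.eq (DfbF.var _) (DfbF.intmul k (DfbF.var _)), 0,
    fun n => ⟨_, rfl⟩, ?_⟩
  rintro n y rfl
  simp

theorem Scal.sub {c d : ℝ} (hc : Scal g c) (hd : Scal g d) : Scal g (c - d) := by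
  obtain ⟨R, hR, C, h1, h2⟩ := hc
  obtain ⟨R', hR', C', h1', h2'⟩ := hd
  refine ⟨fun n y => ∃ a b, R n a ∧ R' n b ∧ y = a - b, ?_, C + C', ?_, ?_⟩
  · exact Dfb.ex (Dfb.ex (Dfb.and (Dfb.comp₂ (R := R) hR (DfbF.var _) (DfbF.var _))
      (Dfb.and (Dfb.comp₂ (R := R') hR' (DfbF.var _) (DfbF.var _))
      (Dfb.eq (DfbF.var _) ((DfbF.var _).sub (DfbF.var _))))))
  · intro n
    obtain ⟨a, ha⟩ := h1 n
    obtain ⟨b, hb⟩ := h1' n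
    exact ⟨a - b, a, b, ha, hb, rfl⟩
  · rintro n y ⟨a, b, ha, hb, rfl⟩
    have h3 := abs_le.1 (h2 n a ha)
    have h4 := abs_le.1 (h2' n b hb)
    push_cast
    rw [abs_le]
    constructor <;> linarith

theorem Scal.mul {c d : ℝ} (hc : Scal g c) (hd : Scal g d) : Scal g (c * d) := by
  obtain ⟨R, hR, C, h1, h2⟩ := hc
  obtain ⟨R', hR', C', h1', h2'⟩ := hd
  obtain ⟨K, hK⟩ := exists_nat_ge (C + |c| * C')
  refine ⟨fun n y => ∃ a, R' n a ∧ R a y, ?_, K, ?_, ?_⟩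
  · exact Dfb.ex (Dfb.and (Dfb.comp₂ (R := R') hR' (DfbF.var _) (DfbF.var _))
      (Dfb.comp₂ (R := R) hR (DfbF.var _) (DfbF.var _)))
  · intro n
    obtain ⟨a, ha⟩ := h1' n
    obtain ⟨b, hb⟩ := h1 a
    exact ⟨b, a, ha, hb⟩
  · rintro n y ⟨a, ha, hb⟩
    have h3 := h2 a y hb
    have h4 := h2' n a ha
    have e : (y : ℝ) - c * d * n = (y - c * a) + c * (a - d * n) := by ring
    rw [e]
    refine (abs_add_le _ _).trans ?_
    rw [abs_mul]
    have : |c| * |(a : ℝ) - d * n| ≤ |c| * C' := by gcongr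
    linarith

theorem Scal.inv {c : ℝ} (hc : Scal g c) (h0 : c ≠ 0) : Scal g c⁻¹ := by
  obtain ⟨R, hR, C, h1, h2⟩ := hc
  obtain ⟨K, hK⟩ := exists_nat_ge (C + |c| / 2)
  obtain ⟨K', hK'⟩ := exists_nat_ge ((C + K) / |c|)
  have hcp : 0 < |c| := abs_pos.2 h0
  refine ⟨fun n y => ∃ w, R y w ∧ w ≤ n + K ∧ n ≤ w + K, ?_, K', ?_, ?_⟩
  · exact Dfb.ex (Dfb.and (Dfb.comp₂ (R := R) hR (DfbF.var _) (DfbF.var _))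
      (Dfb.and (Dfb.le (DfbF.var _) ((DfbF.var _).add (DfbF.nat K)))
        (Dfb.le (DfbF.var _) ((DfbF.var _).add (DfbF.nat K)))))
  · intro n
    obtain ⟨w, hw⟩ := h1 (round (n / c))
    have h3 := h2 _ _ hw
    have h4 := abs_sub_round ((n : ℝ) / c)
    have h5 : |c * (n / c - round ((n : ℝ) / c))| ≤ |c| / 2 := by
      rw [abs_mul]
      nlinarith
    rw [mul_sub, mul_div_cancel₀ _ h0] at h5
    rw [abs_le] at h3 h5
    refine ⟨_, w, hw, ?_, ?_⟩
    · have : (w : ℝ) ≤ n + K := by linarith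
      exact_mod_cast this
    · have : (n : ℝ) ≤ w + K := by linarith
      exact_mod_cast this
  · rintro n y ⟨w, hw, h3, h4⟩
    have h5 := h2 _ _ hw
    refine le_trans ?_ hK'
    rw [le_div_iff₀ hcp, ← abs_mul]
    have e : ((y : ℝ) - c⁻¹ * n) * c = y * c - n := by field_simp
    rw [e]
    have h3' : (w : ℝ) ≤ n + K := by exact_mod_cast h3
    have h4' : (n : ℝ) ≤ w + K := by exact_mod_cast h4
    rw [abs_le] at h5 ⊢
    constructor <;> linarith

theorem Scal.of_nonneg {c : ℝ} (R : ℤ → ℤ → Prop) (hR : Dfb g (fun v : Fin 2 → ℤ => R (v 0) (v 1)))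
    (C : ℝ) (h1 : ∀ n, 0 ≤ n → ∃ y, R n y)
    (h2 : ∀ n y, 0 ≤ n → R n y → |(y : ℝ) - c * n| ≤ C) : Scal g c := by
  obtain ⟨K, hK⟩ := exists_nat_ge C
  refine ⟨fun n y => (0 ≤ n ∧ R n y) ∨ (n < 0 ∧ R (-n) (-y)), ?_, K, ?_, ?_⟩
  · exact Dfb.or (Dfb.and (Dfb.le DfbF.zero (DfbF.var _)) hR)
      (Dfb.and (Dfb.lt (DfbF.var _) DfbF.zero)
        (Dfb.comp₂ (R := R) hR (DfbF.var _).neg (DfbF.var _).neg))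
  · intro n
    rcases le_or_gt 0 n with h | h
    · obtain ⟨y, hy⟩ := h1 n h
      exact ⟨y, Or.inl ⟨h, hy⟩⟩
    · obtain ⟨y, hy⟩ := h1 (-n) (by omega)
      exact ⟨-y, Or.inr ⟨h, by simpa using hy⟩⟩
  · rintro n y (⟨h, hy⟩ | ⟨h, hy⟩)
    · exact (h2 _ _ h hy).trans hK
    · have h3 := (h2 _ _ (by omega) hy).trans hK
      push_cast at h3
      rw [abs_le] at h3 ⊢
      constructor <;> linarith

end Scal

/-! ### The carry predicate -/

section Carry

variable {g f : ℤ → ℤ} {α β : ℝ}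

theorem step1 (h : Ind α) (hβ : 0 < β)
    (hf : DfbF g (fun v : Fin 1 → ℤ => f (v 0)))
    (hfb : ∀ n : ℤ, |(f n : ℝ) - β * n * pr α n| ≤ 1) :
    ∃ (j : ℤ) (E : ℤ → ℤ) (D : ℤ → Prop) (z0 : ℤ) (C θ : ℝ),
      0 < j ∧ 0 < z0 ∧ 1 / 8 < θ ∧ θ < 1 / 4 ∧ DfbF g (fun v : Fin 1 → ℤ => E (v 0)) ∧
      Dfb g (fun v : Fin 1 → ℤ => D (v 0)) ∧
      (∀ z, z0 ≤ z → (D z ↔ θ ≤ er α z)) ∧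
      (∀ z, er α z < θ → |(E z : ℝ) - β * (pr α j + α * j) * z| ≤ C) ∧
      (∀ z, θ ≤ er α z → |(E z : ℝ) - (β * (pr α j + α * j) + β) * z| ≤ C) ∧
      (∀ m, ∃ k, 0 ≤ k ∧ k ≤ 4 * j ∧ er α (m + k) < θ) ∧
      (∀ m, ∃ k, 0 ≤ k ∧ k ≤ 4 * j ∧ θ ≤ er α (m + k)) := by
  obtain ⟨j, hj, hj1, hj2⟩ := exists_er h (a := 1 / 4) (b := 3 / 8) (by norm_num) (by norm_num)
    (by norm_num) 1
  have hjpos : (0 : ℝ) < j := by exact_mod_cast (by omega : 0 < j)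
  set γ := β * (pr α j + α * j) with hγ
  set θ := 1 / 2 - er α j with hθ
  let E : ℤ → ℤ := fun z => f (z + j) - f z - f j
  have hE : DfbF g (fun v : Fin 1 → ℤ => E (v 0)) :=
    ((DfbF.comp₁ hf ((DfbF.var _).add (DfbF.int j))).sub (DfbF.comp₁ hf (DfbF.var _))).sub
      (DfbF.comp₁ hf (DfbF.int j))
  set C : ℝ := β * j * (3 / 2) + 3 with hC
  have hEgen : ∀ z (c : ℤ), 0 ≤ c → c ≤ 1 → pr α (z + j) = pr α z + pr α j + c →
      |(E z : ℝ) - (γ + β * c) * z| ≤ C := by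
    intro z c hc0 hc1 hp
    have h1 := hfb (z + j)
    have h2 := hfb z
    have h3 := hfb j
    rw [hp] at h1
    have hz := er_spec (α := α) z
    have e : (E z : ℝ) - (γ + β * c) * z =
        ((f (z + j) : ℝ) - β * ((z + j : ℤ) : ℝ) * ((pr α z + pr α j + c : ℤ) : ℝ))
        - ((f z : ℝ) - β * z * pr α z) - ((f j : ℝ) - β * j * pr α j)
        + β * j * (c - er α z) := by
      simp only [E, hγ]
      push_cast
      linear_combination (-β * j) * hz
    have hc0' : (0 : ℝ) ≤ c := by exact_mod_cast hc0
    have hc1' : (c : ℝ) ≤ 1 := by exact_mod_cast hc1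
    have h5 := er_ge (α := α) z
    have h6 := er_lt (α := α) z
    have hb : 0 < β * j := by positivity
    rw [e]
    rw [abs_le] at *
    constructor <;> nlinarith
  have hE0 : ∀ z, er α z < θ → |(E z : ℝ) - γ * z| ≤ C := by
    intro z hz
    have h5 := er_ge (α := α) z
    have := hEgen z 0 le_rfl zero_le_one (by
      rw [add_zero]
      exact pr_add (by linarith) (by linarith))
    simpa using this
  have hE1 : ∀ z, θ ≤ er α z → |(E z : ℝ) - (γ + β) * z| ≤ C := by
    intro z hz
    have h5 := er_lt (α := α) z
    have := hEgen z 1 zero_le_one le_rfl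
      (pr_add_c 1 (by push_cast; linarith) (by push_cast; linarith))
    simpa using this
  obtain ⟨r, hr1, hr2⟩ := exists_rat_btwn (show γ < γ + β by linarith)
  obtain ⟨Z1, hZ1⟩ := exists_nat_gt (C / (r - γ))
  obtain ⟨Z2, hZ2⟩ := exists_nat_gt (C / (γ + β - r))
  rw [div_lt_iff₀ (by linarith)] at hZ1 hZ2
  have hD : ∀ z : ℤ, (r.num * z < r.den * E z ↔ (r : ℝ) * z < E z) := by
    intro z
    have hd : (0 : ℝ) < r.den := by exact_mod_cast r.den_pos
    have e : (r : ℝ) = r.num / r.den := Rat.cast_def r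
    rw [e, div_mul_eq_mul_div, div_lt_iff₀ hd]
    rw [mul_comm (E z : ℝ)]
    norm_cast
  refine ⟨j, E, fun z => r.num * z < r.den * E z, Z1 + Z2 + 1, C, θ, by omega, by omega,
    by linarith, by linarith, hE, ?_, ?_, hE0, hE1, ?_, ?_⟩
  · exact Dfb.lt (DfbF.intmul _ (DfbF.var _)) (DfbF.natmul _ hE)
  · intro z hz
    simp only
    rw [hD]
    have hz' : (Z1 : ℝ) + Z2 + 1 ≤ z := by exact_mod_cast hz
    have hZ1' : (0 : ℝ) ≤ Z1 := by positivity
    have hZ2' : (0 : ℝ) ≤ Z2 := by positivity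
    constructor
    · intro hlt
      by_contra hn
      have h1 := (abs_le.1 (hE0 z (not_le.1 hn))).2
      nlinarith
    · intro hle
      have h1 := (abs_le.1 (hE1 z hle)).1
      nlinarith
  · intro m
    rcases lt_or_ge (er α m) θ with h1 | h1
    · exact ⟨0, le_rfl, by omega, by simpa using h1⟩
    · refine ⟨j, by omega, by omega, ?_⟩
      have := er_lt (α := α) m
      rw [er_add_c 1 (by push_cast; linarith) (by push_cast; linarith)]
      push_cast
      linarith
  · intro m
    have step : ∀ m, er α m < θ → er α (m + j) = er α m + er α j := by
      intro m hm
      have := er_ge (α := α) m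
      exact er_add (by linarith) (by linarith)
    rcases le_or_gt θ (er α m) with h1 | h1
    · exact ⟨0, le_rfl, by omega, by simpa using h1⟩
    · have e1 := step _ h1
      rcases le_or_gt θ (er α (m + j)) with h2 | h2
      · exact ⟨j, by omega, by omega, h2⟩
      · have e2 := step _ h2
        rcases le_or_gt θ (er α (m + j + j)) with h3 | h3
        · exact ⟨j + j, by omega, by omega, by rwa [← add_assoc]⟩
        · have e3 := step _ h3
          refine ⟨j + j + j, by omega, by omega, ?_⟩
          have := er_ge (α := α) m
          rw [← add_assoc, ← add_assoc, e3, e2, e1]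
          linarith

/-- Multiplications by `β` and by `α` are coarsely definable. -/
theorem step2 (h : Ind α) (hβ : 0 < β)
    (hf : DfbF g (fun v : Fin 1 → ℤ => f (v 0)))
    (hfb : ∀ n : ℤ, |(f n : ℝ) - β * n * pr α n| ≤ 1) :
    Scal g β ∧ Scal g α := by
  obtain ⟨j, E, D, z0, C, θ, hj, hz0, -, -, hE, hD, hDs, hE0, hE1, hg0, hg1⟩ := step1 h hβ hf hfb
  set γ := β * (pr α j + α * j) with hγ
  have hjpos : (0 : ℝ) < j := by exact_mod_cast hj
  have hz0p : (0 : ℝ) < z0 := by exact_mod_cast hz0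
  have bound : ∀ (c : ℝ) (n k y : ℤ), 0 ≤ k → k ≤ 4 * j →
      |(y : ℝ) - c * ((n + z0 + k : ℤ) : ℝ)| ≤ C → |(y : ℝ) - c * n| ≤ C + |c| * (z0 + 4 * j) := by
    intro c n k y hk0 hk1 hy
    have hk0' : (0 : ℝ) ≤ k := by exact_mod_cast hk0
    have hk1' : (k : ℝ) ≤ 4 * j := by exact_mod_cast hk1
    have e : (y : ℝ) - c * n = (y - c * ((n + z0 + k : ℤ) : ℝ)) + c * (z0 + k) := by
      push_cast
      ring
    rw [e]
    refine (abs_add_le _ _).trans ?_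
    rw [abs_mul, abs_of_nonneg (by positivity : (0 : ℝ) ≤ z0 + k)]
    have := abs_nonneg c
    have : |c| * ((z0 : ℝ) + k) ≤ |c| * (z0 + 4 * j) := by gcongr
    linarith
  have s1 : Scal g γ := by
    refine Scal.of_nonneg (fun n y => ∃ k, 0 ≤ k ∧ k ≤ 4 * j ∧ ¬ D (n + z0 + k) ∧
      y = E (n + z0 + k)) ?_ (C + |γ| * (z0 + 4 * j)) ?_ ?_
    · have hs : ∀ i k, DfbF g (fun v : Option (Fin 2) → ℤ => v i + z0 + v k) := fun i k =>
        ((DfbF.var _).add (DfbF.int z0)).add (DfbF.var _)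
      exact Dfb.ex (Dfb.and (Dfb.le DfbF.zero (DfbF.var _)) (Dfb.and
        (Dfb.le (DfbF.var _) (DfbF.int _)) (Dfb.and (Dfb.comp₁ (R := D) hD (hs _ _)).not
        (Dfb.eq (DfbF.var _) (DfbF.comp₁ hE (hs _ _))))))
    · intro n hn
      obtain ⟨k, hk0, hk1, hk⟩ := hg0 (n + z0)
      exact ⟨_, k, hk0, hk1, by rw [hDs _ (by omega)]; exact not_le.2 hk, rfl⟩
    · rintro n y hn ⟨k, hk0, hk1, hk, rfl⟩
      rw [hDs _ (by omega), not_le] at hk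
      exact bound _ _ _ _ hk0 hk1 (hE0 _ hk)
  have s2 : Scal g (γ + β) := by
    refine Scal.of_nonneg (fun n y => ∃ k, 0 ≤ k ∧ k ≤ 4 * j ∧ D (n + z0 + k) ∧
      y = E (n + z0 + k)) ?_ (C + |γ + β| * (z0 + 4 * j)) ?_ ?_
    · have hs : ∀ i k, DfbF g (fun v : Option (Fin 2) → ℤ => v i + z0 + v k) := fun i k =>
        ((DfbF.var _).add (DfbF.int z0)).add (DfbF.var _)
      exact Dfb.ex (Dfb.and (Dfb.le DfbF.zero (DfbF.var _)) (Dfb.and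
        (Dfb.le (DfbF.var _) (DfbF.int _)) (Dfb.and (Dfb.comp₁ (R := D) hD (hs _ _))
        (Dfb.eq (DfbF.var _) (DfbF.comp₁ hE (hs _ _))))))
    · intro n hn
      obtain ⟨k, hk0, hk1, hk⟩ := hg1 (n + z0)
      exact ⟨_, k, hk0, hk1, by rw [hDs _ (by omega)]; exact hk, rfl⟩
    · rintro n y hn ⟨k, hk0, hk1, hk, rfl⟩
      rw [hDs _ (by omega)] at hk
      exact bound _ _ _ _ hk0 hk1 (hE1 _ hk)
  have s3 : Scal g β := by
    have := s2.sub s1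
    simpa using this
  refine ⟨s3, ?_⟩
  have s4 := ((s1.mul (s3.inv hβ.ne')).sub (Scal.int (pr α j))).mul
    ((Scal.int j).inv hjpos.ne')
  have e : (γ * β⁻¹ - pr α j) * (j : ℝ)⁻¹ = α := by
    rw [hγ]
    field_simp
    ring
  rwa [e] at s4

/-- A definable predicate `Tiny n x` which says that `er x` is tiny compared to `1 / n`. -/
theorem step5 (h : Ind α) (hβ : 0 < β)
    (hf : DfbF g (fun v : Fin 1 → ℤ => f (v 0)))
    (hfb : ∀ n : ℤ, |(f n : ℝ) - β * n * pr α n| ≤ 1) :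
    ∃ T : ℤ → ℤ → Prop, Dfb g (fun v : Fin 2 → ℤ => T (v 0) (v 1)) ∧
      (∀ n x, 1 ≤ n → T n x → |er α x| ≤ 2 / n) ∧
      (∀ n, ∃ δ > 0, ∀ x, |er α x| < δ → T n x) := by
  obtain ⟨j, E, D, z0, C, θ, hj, hz0, hθ1, hθ2, hE, hD, hDs, -⟩ := step1 h hβ hf hfb
  refine ⟨fun n x => ∀ z k, 1 ≤ k → k ≤ n → z0 ≤ z → z0 ≤ z + x →
    (¬ D z ∧ D (z + x)) → ¬ (¬ D (z + k) ∧ D (z + k + x)), ?_, ?_, ?_⟩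
  · refine Dfb.all (Dfb.all ?_)
    have hd : ∀ {F : (Option (Option (Fin 2)) → ℤ) → ℤ}, DfbF g F → Dfb g (fun v => D (F v)) :=
      fun hF => Dfb.comp₁ (R := D) hD hF
    exact Dfb.imp (Dfb.le DfbF.one (DfbF.var _)) <| Dfb.imp (Dfb.le (DfbF.var _) (DfbF.var _)) <|
      Dfb.imp (Dfb.le (DfbF.int z0) (DfbF.var _)) <|
      Dfb.imp (Dfb.le (DfbF.int z0) ((DfbF.var _).add (DfbF.var _))) <|
      Dfb.imp ((hd (DfbF.var _)).not.and (hd ((DfbF.var _).add (DfbF.var _)))) <|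
      Dfb.not ((hd ((DfbF.var _).add (DfbF.var _))).not.and
        (hd (((DfbF.var _).add (DfbF.var _)).add (DfbF.var _))))
  · intro n x hn hT
    by_contra hlt
    rw [not_le] at hlt
    have hnpos : (0 : ℝ) < n := by exact_mod_cast hn
    have hx := er_abs (α := α) x
    have hn4 : (4 : ℝ) < n := by
      have := hlt.trans_le hx
      rw [div_lt_iff₀ hnpos] at this
      linarith
    have hinv : 1 / (n + 1 : ℝ) < 1 / 4 := by
      apply one_div_lt_one_div_of_lt <;> linarith
    have hinv2 : 1 / (n + 1 : ℝ) < 2 / n := by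
      rw [div_lt_div_iff₀ (by positivity) hnpos]
      linarith
    obtain ⟨p, k, hk0, hkn, hpk⟩ := Real.exists_int_int_abs_mul_sub_le α (n := n.toNat) (by omega)
    have hnn : ((n.toNat : ℕ) : ℝ) = n := by
      have : ((n.toNat : ℕ) : ℤ) = n := Int.toNat_of_nonneg (by omega)
      exact_mod_cast this
    rw [hnn, mul_comm] at hpk
    have hek : er α k = α * k - p := by
      rw [abs_le] at hpk
      exact er_unique (by linarith) (by linarith)
    rw [← hek] at hpk
    -- the arc
    have arc : ∃ lo hi : ℝ, -(1 / 2) ≤ lo ∧ hi ≤ 1 / 2 ∧ 1 / (n + 1 : ℝ) < hi - lo ∧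
        ∀ z, lo < er α z → er α z < hi → er α z < θ ∧ θ ≤ er α (z + x) := by
      have hx1 := er_ge (α := α) x
      have hx2 := er_lt (α := α) x
      rcases le_total 0 (er α x) with h0 | h0
      · rw [abs_of_nonneg h0] at hlt
        refine ⟨θ - er α x, min θ (1 / 2 - er α x), by linarith, ?_, ?_, ?_⟩
        · exact (min_le_left _ _).trans (by linarith)
        · rw [lt_sub_iff_add_lt, lt_min_iff]
          constructor <;> linarith
        · intro z hz1 hz2
          rw [lt_min_iff] at hz2
          refine ⟨hz2.1, ?_⟩
          rw [er_add (by linarith) (by linarith)]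
          linarith
      · rw [abs_of_nonpos h0] at hlt
        refine ⟨max (-(1 / 2)) (θ - 1 - er α x), -(1 / 2) - er α x, le_max_left _ _, by linarith,
          ?_, ?_⟩
        · rw [lt_sub_comm, max_lt_iff]
          constructor <;> linarith
        · intro z hz1 hz2
          rw [max_lt_iff] at hz1
          refine ⟨by linarith, ?_⟩
          rw [er_add_c (-1) (by push_cast; linarith) (by push_cast; linarith)]
          push_cast
          linarith
    obtain ⟨lo, hi, hlo, hhi, hlen, harc⟩ := arc
    rw [abs_le] at hpk
    obtain ⟨z, hz, hz1, hz2⟩ := exists_er h (a := max lo (lo - er α k)) (b := min hi (hi - er α k))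
      (by
        rw [max_lt_iff, lt_min_iff, lt_min_iff]
        refine ⟨⟨?_, ?_⟩, ?_, ?_⟩ <;> linarith)
      (hlo.trans (le_max_left _ _)) ((min_le_left _ _).trans hhi) (z0 + |x|)
    rw [max_lt_iff] at hz1
    rw [lt_min_iff] at hz2
    have hzk : er α (z + k) = er α z + er α k := er_add (by linarith) (by linarith)
    have a1 := harc z hz1.1 hz2.1
    have a2 := harc (z + k) (by linarith) (by linarith)
    have b1 := neg_abs_le x
    have b2 := abs_nonneg x
    refine hT z k hk0 (by omega) (by omega) (by omega) ?_ ?_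
    · rw [hDs z (by omega), hDs (z + x) (by omega), not_le]
      exact a1
    · rw [hDs (z + k) (by omega), hDs (z + k + x) (by omega), not_le]
      exact a2
  · intro n
    have hmin : ∃ δ > 0, ∀ k : ℤ, 1 ≤ k → k ≤ n → δ ≤ |er α k| := by
      by_cases hne : (Finset.Icc 1 n).Nonempty
      · obtain ⟨k0, hk0, hmin⟩ := Finset.exists_min_image (Finset.Icc 1 n) (fun k => |er α k|) hne
        rw [Finset.mem_Icc] at hk0
        refine ⟨|er α k0|, abs_pos.2 (er_ne_zero h (by omega)), fun k h1 h2 => ?_⟩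
        exact hmin k (Finset.mem_Icc.2 ⟨h1, h2⟩)
      · refine ⟨1, one_pos, fun k h1 h2 => ?_⟩
        exact absurd ⟨k, Finset.mem_Icc.2 ⟨h1, h2⟩⟩ hne
    obtain ⟨δ, hδ, hmin⟩ := hmin
    refine ⟨min δ (1 / 4), lt_min hδ (by norm_num), ?_⟩
    intro x hx z k hk1 hkn hz hzx hI1 hI2
    rw [lt_min_iff] at hx
    rw [hDs z hz, hDs (z + x) hzx, not_le] at hI1
    rw [hDs (z + k) (by omega), hDs (z + k + x) (by omega), not_le] at hI2
    have hx' := abs_lt.1 hx.2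
    have key : ∃ s, ∀ w, er α w < θ → θ ≤ er α (w + x) → s ≤ er α w ∧ er α w < s + |er α x| := by
      rcases le_total 0 (er α x) with h0 | h0
      · refine ⟨θ - er α x, fun w h1 h2 => ?_⟩
        rw [abs_of_nonneg h0]
        have hw := er_ge (α := α) w
        rw [er_add (by linarith) (by linarith)] at h2
        constructor <;> linarith
      · refine ⟨-(1 / 2), fun w h1 h2 => ⟨er_ge w, ?_⟩⟩
        rw [abs_of_nonpos h0]
        have hw := er_ge (α := α) w
        rcases er_add_cases (α := α) w x with ⟨e, -⟩ | ⟨e, -⟩ | ⟨e, h3⟩ <;> linarith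
    obtain ⟨s, hs⟩ := key
    have a1 := hs z hI1.1 hI1.2
    have a2 := hs (z + k) hI2.1 hI2.2
    have hk := hmin k hk1 hkn
    have hk2 := er_ge (α := α) k
    have hk3 := er_lt (α := α) k
    have hlt : |er α (z + k) - er α z| < |er α k| ∧ |er α (z + k) - er α z| < 1 / 4 := by
      have : |er α (z + k) - er α z| < |er α x| := by
        rw [abs_lt]
        constructor <;> linarith
      constructor <;> linarith
    rcases er_add_cases (α := α) z k with ⟨e, -⟩ | ⟨e, -⟩ | ⟨e, -⟩
    · rw [e] at hlt
      simp at hlt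
    · have := abs_lt.1 hlt.2
      linarith
    · have := abs_lt.1 hlt.2
      linarith

end Carry

/-! ### Definability of multiplication -/

section Mul

variable {g f : ℤ → ℤ} {α β : ℝ}

/-- Definability of the nearest integer to `α n` when it is close to `α n`. -/
theorem step3 (hα : Scal g α) (r : ℕ) (hr : 2 ≤ r) :
    ∃ P : ℤ → ℤ → Prop, Dfb g (fun v : Fin 2 → ℤ => P (v 0) (v 1)) ∧
      (∀ n y, P n y → y = pr α n ∧ |er α n| < 1 / r) ∧
      (∀ n, |er α n| ≤ 1 / (2 * r) → P n (pr α n)) := by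
  obtain ⟨R, hR, C, h1, h2⟩ := hα
  have hr' : (2 : ℝ) ≤ r := by exact_mod_cast hr
  let N : ℕ := 4 * r * C + 1
  have hN : (N : ℝ) = 4 * r * C + 1 := by simp [N]
  have hC : (0 : ℝ) ≤ C := by positivity
  have hNpos : (0 : ℝ) < N := by rw [hN]; positivity
  refine ⟨fun n y => ∃ w, R (N * n) w ∧ (4 * r : ℕ) * (w - N * y) ≤ (3 * N : ℕ) ∧
    (4 * r : ℕ) * (N * y - w) ≤ (3 * N : ℕ), ?_, ?_, ?_⟩
  · exact Dfb.ex (Dfb.and (Dfb.comp₂ (R := R) hR (DfbF.natmul _ (DfbF.var _)) (DfbF.var _))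
      (Dfb.and (Dfb.le (DfbF.natmul _ ((DfbF.var _).sub (DfbF.natmul _ (DfbF.var _)))) (DfbF.nat _))
      (Dfb.le (DfbF.natmul _ ((DfbF.natmul _ (DfbF.var _)).sub (DfbF.var _))) (DfbF.nat _))))
  · rintro n y ⟨w, hw, h3, h4⟩
    have h5 := h2 _ _ hw
    have h3' : (4 * r : ℝ) * (w - N * y) ≤ 3 * N := by exact_mod_cast h3
    have h4' : (4 * r : ℝ) * (N * y - w) ≤ 3 * N := by exact_mod_cast h4
    push_cast at h5
    rw [abs_le] at h5
    have h6 : |α * n - y| < 1 / r := by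
      have a1 : (4 * r : ℝ) * (N * (α * n - y)) < 4 * N := by nlinarith
      have a2 : -(4 * N) < (4 * r : ℝ) * (N * (α * n - y)) := by nlinarith
      have b1 : (r : ℝ) * (α * n - y) < 1 := by
        by_contra hh
        rw [not_lt] at hh
        nlinarith
      have b2 : -1 < (r : ℝ) * (α * n - y) := by
        by_contra hh
        rw [not_lt] at hh
        nlinarith
      rw [lt_div_iff₀ (by positivity), ← abs_of_nonneg (by positivity : (0 : ℝ) ≤ r), ← abs_mul,
        abs_lt, mul_comm]
      exact ⟨b2, b1⟩
    have h7 : 1 / (r : ℝ) ≤ 1 / 2 := by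
      apply one_div_le_one_div_of_le <;> linarith
    have h8 := abs_lt.1 h6
    have e1 : pr α n = y := pr_unique (by linarith) (by linarith)
    have e2 : er α n = α * n - y := er_unique (by linarith) (by linarith)
    exact ⟨e1.symm, by rwa [e2]⟩
  · intro n hn
    obtain ⟨w, hw⟩ := h1 (N * n)
    have h5 := h2 _ _ hw
    push_cast at h5
    rw [abs_le] at h5
    have hs := er_spec (α := α) n
    have e : α * (N * n) = N * pr α n + N * er α n := by
      linear_combination (N : ℝ) * hs
    rw [e] at h5
    rw [le_div_iff₀ (by positivity)] at hn
    have hn1 : er α n * (2 * r) ≤ 1 := by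
      have := le_abs_self (er α n)
      nlinarith
    have hn2 : -er α n * (2 * r) ≤ 1 := by
      have := neg_le_abs (er α n)
      nlinarith
    have k1 : 2 * ((N : ℝ) * (er α n * (2 * r))) ≤ 2 * (N * 1) := by gcongr
    have k2 : 2 * ((N : ℝ) * (-er α n * (2 * r))) ≤ 2 * (N * 1) := by gcongr
    have k3 : (4 * r : ℝ) * (w - (N * pr α n + N * er α n)) ≤ 4 * r * C :=
      mul_le_mul_of_nonneg_left h5.2 (by positivity)
    have k4 : (4 * r : ℝ) * ((N * pr α n + N * er α n) - w) ≤ 4 * r * C :=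
      mul_le_mul_of_nonneg_left (by linarith) (by positivity)
    refine ⟨w, hw, ?_, ?_⟩
    · have : (4 * r : ℝ) * (w - N * pr α n) ≤ 3 * N := by linarith
      exact_mod_cast this
    · have : (4 * r : ℝ) * (N * pr α n - w) ≤ 3 * N := by linarith
      exact_mod_cast this

/-- The bilinear form. -/
def Hf (f : ℤ → ℤ) (n m : ℤ) : ℤ := f (n + m) - f n - f m

theorem Hf_bound (hfb : ∀ n : ℤ, |(f n : ℝ) - β * n * pr α n| ≤ 1) {n m : ℤ}
    (h1 : -(1 / 2) ≤ er α n + er α m) (h2 : er α n + er α m < 1 / 2) :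
    |(Hf f n m : ℝ) - β * (n * pr α m + m * pr α n)| ≤ 3 := by
  have a1 := hfb (n + m)
  have a2 := hfb n
  have a3 := hfb m
  rw [pr_add h1 h2] at a1
  unfold Hf
  push_cast at a1 ⊢
  rw [abs_le] at *
  constructor <;> nlinarith

theorem Hf_dfb (hf : DfbF g (fun v : Fin 1 → ℤ => f (v 0))) {ι : Type} {a b : (ι → ℤ) → ℤ}
    (ha : DfbF g a) (hb : DfbF g b) : DfbF g (fun v => Hf f (a v) (b v)) :=
  ((DfbF.comp₁ hf (ha.add hb)).sub (DfbF.comp₁ hf ha)).sub (DfbF.comp₁ hf hb)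

/-- Coarse definability of `- β n e(m)`. -/
theorem step6 (h : Ind α) (hβ : 0 < β)
    (hf : DfbF g (fun v : Fin 1 → ℤ => f (v 0)))
    (hfb : ∀ n : ℤ, |(f n : ℝ) - β * n * pr α n| ≤ 1) :
    ∃ V : ℤ → ℤ → ℤ → Prop, Dfb g (fun v : Fin 3 → ℤ => V (v 0) (v 1) (v 2)) ∧ ∃ K : ℝ,
      ∀ n m, 1 ≤ n → |er α n| < 1 / 11 → |er α m| < 1 / 11 →
        (∃ v, V n m v) ∧ ∀ v, V n m v → |(v : ℝ) + β * n * er α m| ≤ K := by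
  obtain ⟨-, hα⟩ := step2 h hβ hf hfb
  obtain ⟨T, hT, hT1, hT2⟩ := step5 h hβ hf hfb
  obtain ⟨P, hP, hP1, hP2⟩ := step3 hα 5 (by norm_num)
  obtain ⟨R, hR, C, hR1, hR2⟩ := hα
  refine ⟨fun n m v => ∃ x x1 x2 p, P x x1 ∧ P x1 x2 ∧ T n x ∧ T n (x1 - m) ∧ R (Hf f n x) p ∧
    v = Hf f n x1 - p, ?_, 3 + C + 3 * |α| + β * (2 + (2 * |α| + 1)), ?_⟩
  · exact Dfb.ex <| Dfb.ex <| Dfb.ex <| Dfb.ex <|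
      Dfb.and (Dfb.comp₂ (R := P) hP (DfbF.var _) (DfbF.var _)) <|
      Dfb.and (Dfb.comp₂ (R := P) hP (DfbF.var _) (DfbF.var _)) <|
      Dfb.and (Dfb.comp₂ (R := T) hT (DfbF.var _) (DfbF.var _)) <|
      Dfb.and (Dfb.comp₂ (R := T) hT (DfbF.var _) ((DfbF.var _).sub (DfbF.var _))) <|
      Dfb.and (Dfb.comp₂ (R := R) hR (Hf_dfb hf (DfbF.var _) (DfbF.var _)) (DfbF.var _)) <|
      Dfb.eq (DfbF.var _) ((Hf_dfb hf (DfbF.var _) (DfbF.var _)).sub (DfbF.var _))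
  · intro n m hn hen hem
    have hn' : (1 : ℝ) ≤ n := by exact_mod_cast hn
    have hem' := abs_lt.1 hem
    have hen' := abs_lt.1 hen
    constructor
    · obtain ⟨δ, hδ, hδT⟩ := hT2 n
      obtain ⟨x, hx, hx1⟩ := exists_er2 h (t := er α m) (δ := min δ (1 / 110)) (by linarith)
        (lt_min hδ (by norm_num))
      rw [lt_min_iff] at hx hx1
      have hx1' := abs_lt.1 hx1.2
      obtain ⟨p, hp⟩ := hR1 (Hf f n x)
      refine ⟨_, x, pr α x, pr α (pr α x), p, hP2 x ?_, hP2 _ ?_, hδT _ hx.1, hδT _ ?_, hp, rfl⟩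
      · norm_num
        linarith
      · rw [abs_le]
        norm_num
        constructor <;> linarith
      · rw [er_sub (by linarith) (by linarith)]
        exact hx1.1
    · rintro v ⟨x, x1, x2, p, hx, hx1, ht, ht1, hp, rfl⟩
      obtain ⟨rfl, hex⟩ := hP1 _ _ hx
      obtain ⟨-, hex1⟩ := hP1 _ _ hx1
      set x1 := pr α x with hx1def
      have hex' := abs_lt.1 hex
      have hex1' := abs_lt.1 hex1
      push_cast at hex' hex1'
      have b1 := hT1 _ _ hn ht
      have b2 := hT1 _ _ hn ht1
      rw [er_sub (by linarith) (by linarith)] at b2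
      rw [le_div_iff₀ (by linarith)] at b1 b2
      have H1 := Hf_bound hfb (n := n) (m := x) (by linarith) (by linarith)
      have H2 := Hf_bound hfb (n := n) (m := x1) (by linarith) (by linarith)
      have hpb := hR2 _ _ hp
      have s1 := er_spec (α := α) x
      have s2 := er_spec (α := α) x1
      rw [← hx1def] at s1
      rw [← hx1def] at H1
      have e : ((Hf f n x1 - p : ℤ) : ℝ) + β * n * er α m =
          (Hf f n x1 - β * (n * pr α x1 + x1 * pr α n)) - (p - α * Hf f n x)
          - α * (Hf f n x - β * (n * x1 + x * pr α n))
          - β * ((er α x1 - er α m) * n + pr α n * er α x) := by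
        push_cast
        linear_combination (-β * n) * s2 + (-β * pr α n) * s1
      have c1 : |α * (Hf f n x - β * (n * x1 + x * pr α n))| ≤ 3 * |α| := by
        rw [abs_mul, mul_comm]
        gcongr
      have c2 : |(er α x1 - er α m) * n| ≤ 2 := by
        rw [abs_mul, abs_of_nonneg (by linarith : (0 : ℝ) ≤ n)]
        exact b2
      have c3 : |pr α n * er α x| ≤ 2 * |α| + 1 := by
        have d1 : |(pr α n : ℝ)| ≤ |α| * n + 1 / 2 := by
          have : (pr α n : ℝ) = α * n - er α n := by
            have := er_spec (α := α) n
            linarith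
          rw [this]
          refine (abs_sub _ _).trans ?_
          rw [abs_mul, abs_of_nonneg (by linarith : (0 : ℝ) ≤ n)]
          linarith
        rw [abs_mul]
        have d2 := abs_nonneg (er α x)
        have d3 := abs_nonneg α
        calc |(pr α n : ℝ)| * |er α x| ≤ (|α| * n + 1 / 2) * |er α x| := by gcongr
          _ = |α| * (|er α x| * n) + 1 / 2 * |er α x| := by ring
          _ ≤ |α| * 2 + 1 / 2 * (2 : ℝ) := by
              gcongr
              linarith
          _ = 2 * |α| + 1 := by ring
      have c4 : |β * ((er α x1 - er α m) * n + pr α n * er α x)| ≤ β * (2 + (2 * |α| + 1)) := by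
        rw [abs_mul, abs_of_pos hβ]
        gcongr
        exact (abs_add_le _ _).trans (by linarith)
      rw [e]
      refine (abs_sub _ _).trans (add_le_add ((abs_sub _ _).trans (add_le_add ((abs_sub _ _).trans
        (add_le_add H2 hpb)) c1)) c4)

/-- Coarse definability of multiplication on a set `X`. -/
def CMul (g : ℤ → ℤ) (X : ℤ → Prop) : Prop :=
  Dfb g (fun v : Fin 1 → ℤ => X (v 0)) ∧ ∃ R : ℤ → ℤ → ℤ → Prop,
    Dfb g (fun v : Fin 3 → ℤ => R (v 0) (v 1) (v 2)) ∧ ∃ K : ℕ, ∀ n m, X n → X m →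
      (∃ y, R n m y) ∧ ∀ y, R n m y → |(y : ℝ) - n * m| ≤ K

theorem step6' (h : Ind α) (hβ : 0 < β)
    (hf : DfbF g (fun v : Fin 1 → ℤ => f (v 0)))
    (hfb : ∀ n : ℤ, |(f n : ℝ) - β * n * pr α n| ≤ 1) :
    ∃ X : ℤ → Prop, CMul g X ∧ ∀ n, 1 ≤ n → |er α n| < 1 / 22 → X n := by
  obtain ⟨V, hV, K, hVK⟩ := step6 h hβ hf hfb
  obtain ⟨hsβ, hα⟩ := step2 h hβ hf hfb
  obtain ⟨P, hP, hP1, hP2⟩ := step3 hα 11 (by norm_num)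
  have hα0 : α ≠ 0 := by
    rintro rfl
    have := h 0 1 0 (by simp)
    exact one_ne_zero this.2.1
  obtain ⟨R, hR, C, hR1, hR2⟩ := (((Scal.int 2).mul hα).mul hsβ).inv
    (by push_cast; positivity)
  set c : ℝ := (((2 : ℤ) : ℝ) * α * β)⁻¹ with hc
  obtain ⟨N, hN⟩ := exists_nat_ge (C + |c| * (3 + 2 * K))
  refine ⟨fun n => 1 ≤ n ∧ ∃ y, P n y, ⟨?_, fun n m y => ∃ v w, V n m v ∧ V m n w ∧
    R (Hf f n m - v - w) y, ?_, N, ?_⟩, ?_⟩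
  · exact Dfb.and (Dfb.le DfbF.one (DfbF.var _))
      (Dfb.ex (Dfb.comp₂ (R := P) hP (DfbF.var _) (DfbF.var _)))
  · exact Dfb.ex <| Dfb.ex <|
      Dfb.and (Dfb.comp₃ (R := V) hV (DfbF.var _) (DfbF.var _) (DfbF.var _)) <|
      Dfb.and (Dfb.comp₃ (R := V) hV (DfbF.var _) (DfbF.var _) (DfbF.var _)) <|
      Dfb.comp₂ (R := R) hR (((Hf_dfb hf (DfbF.var _) (DfbF.var _)).sub (DfbF.var _)).sub
        (DfbF.var _)) (DfbF.var _)
  · rintro n m ⟨hn, y, hy⟩ ⟨hm, z, hz⟩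
    have en := (hP1 _ _ hy).2
    have em := (hP1 _ _ hz).2
    push_cast at en em
    obtain ⟨⟨v, hv⟩, hv2⟩ := hVK n m hn en em
    obtain ⟨⟨w, hw⟩, hw2⟩ := hVK m n hm em en
    constructor
    · obtain ⟨y, hy⟩ := hR1 (Hf f n m - v - w)
      exact ⟨y, v, w, hv, hw, hy⟩
    · rintro y ⟨v, w, hv, hw, hy⟩
      have a1 := hv2 v hv
      have a2 := hw2 w hw
      have a3 := hR2 _ _ hy
      rw [abs_lt] at en em
      have a4 := Hf_bound hfb (n := n) (m := m) (by linarith) (by linarith)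
      have s1 := er_spec (α := α) n
      have s2 := er_spec (α := α) m
      have hc1 : c * (2 * α * β) = 1 := by
        rw [hc]
        push_cast
        field_simp
      have e : (y : ℝ) - n * m = (y - c * ((Hf f n m - v - w : ℤ) : ℝ)) +
          c * ((Hf f n m - β * (n * pr α m + m * pr α n)) - (v + β * n * er α m)
            - (w + β * m * er α n)) := by
        push_cast
        linear_combination (n * m : ℝ) * hc1 - (c * β * n) * s2 - (c * β * m) * s1
      rw [e]
      refine le_trans ((abs_add_le _ _).trans (add_le_add a3 ?_)) hN
      rw [abs_mul]
      gcongr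
      refine (abs_sub _ _).trans ?_
      refine (add_le_add (abs_sub _ _) le_rfl).trans ?_
      linarith
  · intro n hn hen
    refine ⟨hn, _, hP2 n ?_⟩
    norm_num
    linarith

theorem CMul.double {X : ℤ → Prop} (hX : CMul g X) :
    CMul g (fun n => ∃ b, X b ∧ X (n + b)) := by
  obtain ⟨hd, R, hR, K, hK⟩ := hX
  have hd' : ∀ {ι : Type} {F : (ι → ℤ) → ℤ}, DfbF g F → Dfb g (fun v => X (F v)) :=
    fun hF => Dfb.comp₁ (R := X) hd hF
  have hR' : ∀ {ι : Type} {F G H : (ι → ℤ) → ℤ}, DfbF g F → DfbF g G → DfbF g H →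
      Dfb g (fun v => R (F v) (G v) (H v)) :=
    fun hF hG hH => Dfb.comp₃ (R := R) hR hF hG hH
  refine ⟨?_, fun n m y => ∃ b d y1 y2 y3 y4, X b ∧ X (n + b) ∧ X d ∧ X (m + d) ∧
    R (n + b) (m + d) y1 ∧ R b (m + d) y2 ∧ R (n + b) d y3 ∧ R b d y4 ∧ y = y1 - y2 - y3 + y4,
    ?_, 4 * K, ?_⟩
  · exact Dfb.ex (Dfb.and (hd' (DfbF.var _)) (hd' ((DfbF.var _).add (DfbF.var _))))
  · exact Dfb.ex <| Dfb.ex <| Dfb.ex <| Dfb.ex <| Dfb.ex <| Dfb.ex <|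
      Dfb.and (hd' (DfbF.var _)) <| Dfb.and (hd' ((DfbF.var _).add (DfbF.var _))) <|
      Dfb.and (hd' (DfbF.var _)) <| Dfb.and (hd' ((DfbF.var _).add (DfbF.var _))) <|
      Dfb.and (hR' ((DfbF.var _).add (DfbF.var _)) ((DfbF.var _).add (DfbF.var _)) (DfbF.var _)) <|
      Dfb.and (hR' (DfbF.var _) ((DfbF.var _).add (DfbF.var _)) (DfbF.var _)) <|
      Dfb.and (hR' ((DfbF.var _).add (DfbF.var _)) (DfbF.var _) (DfbF.var _)) <|
      Dfb.and (hR' (DfbF.var _) (DfbF.var _) (DfbF.var _)) <|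
      Dfb.eq (DfbF.var _) ((((DfbF.var _).sub (DfbF.var _)).sub (DfbF.var _)).add (DfbF.var _))
  · rintro n m ⟨b, hb, hnb⟩ ⟨d, hdd, hmd⟩
    constructor
    · obtain ⟨y1, h1⟩ := (hK _ _ hnb hmd).1
      obtain ⟨y2, h2⟩ := (hK _ _ hb hmd).1
      obtain ⟨y3, h3⟩ := (hK _ _ hnb hdd).1
      obtain ⟨y4, h4⟩ := (hK _ _ hb hdd).1
      exact ⟨_, b, d, y1, y2, y3, y4, hb, hnb, hdd, hmd, h1, h2, h3, h4, rfl⟩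
    · clear hb hnb hdd hmd b d
      rintro y ⟨b, d, y1, y2, y3, y4, hb, hnb, hdd, hmd, h1, h2, h3, h4, rfl⟩
      have a1 := (hK _ _ hnb hmd).2 _ h1
      have a2 := (hK _ _ hb hmd).2 _ h2
      have a3 := (hK _ _ hnb hdd).2 _ h3
      have a4 := (hK _ _ hb hdd).2 _ h4
      push_cast at *
      rw [abs_le] at *
      constructor <;> linarith

theorem double_mem (h : Ind α) {X : ℤ → Prop} {ρ : ℝ} (hρ1 : ρ ≤ 1 / 2)
    (hX : ∀ n, 1 ≤ n → |er α n| < ρ → X n) (n : ℤ) (hn : |er α n| < 2 * ρ) :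
    ∃ b, X b ∧ X (n + b) := by
  have hn' := abs_lt.1 hn
  have h1 := er_ge (α := α) n
  have h2 := er_lt (α := α) n
  obtain ⟨b, hb, hb1, hb2⟩ := exists_er h
    (a := max (-ρ) (-ρ - er α n)) (b := min ρ (ρ - er α n))
    (by
      rw [max_lt_iff, lt_min_iff, lt_min_iff]
      refine ⟨⟨?_, ?_⟩, ?_, ?_⟩ <;> linarith)
    (le_max_of_le_left (by linarith)) (min_le_of_left_le hρ1) (|n| + 1)
  rw [max_lt_iff] at hb1
  rw [lt_min_iff] at hb2
  have a1 := neg_abs_le n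
  have a2 := abs_nonneg n
  refine ⟨b, hX b (by omega) (abs_lt.2 ⟨by linarith, by linarith⟩), hX _ (by omega) ?_⟩
  rw [er_add (by linarith) (by linarith), abs_lt]
  constructor <;> linarith

theorem mulDef_of_CMul (hX : CMul g (fun _ => True)) : MulDef g := by
  obtain ⟨-, R, hR, K, hK⟩ := hX
  let N : ℕ := 2 * K + 1
  have hN : (N : ℝ) = 2 * K + 1 := by simp [N]
  refine Dfb.congr (P := fun v : Fin 3 → ℤ => ∃ y, R (N * v 0) (v 1) y ∧ y ≤ N * v 2 + K ∧
    N * v 2 ≤ y + K) ?_ ?_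
  · exact Dfb.ex <| Dfb.and (Dfb.comp₃ (R := R) hR (DfbF.natmul _ (DfbF.var _)) (DfbF.var _)
      (DfbF.var _)) <|
      Dfb.and (Dfb.le (DfbF.var _) ((DfbF.natmul _ (DfbF.var _)).add (DfbF.nat _)))
      (Dfb.le (DfbF.natmul _ (DfbF.var _)) ((DfbF.var _).add (DfbF.nat _)))
  · intro v
    obtain ⟨⟨y0, hy0⟩, hb⟩ := hK (N * v 0) (v 1) trivial trivial
    constructor
    · rintro ⟨y, hy, h1, h2⟩
      have a := hb y hy
      rw [abs_le] at a
      have a1 : y - N * v 0 * v 1 ≤ K := by exact_mod_cast a.2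
      have a2 : -(K : ℤ) ≤ y - N * v 0 * v 1 := by exact_mod_cast a.1
      have b1 : (N : ℤ) * (v 2 - v 0 * v 1) < N * 1 := by
        have : (N : ℤ) = 2 * K + 1 := by simp [N]
        linarith
      have b2 : (N : ℤ) * (v 0 * v 1 - v 2) < N * 1 := by
        have : (N : ℤ) = 2 * K + 1 := by simp [N]
        linarith
      have hp : (0 : ℤ) < N := by simp [N]
      have c1 := lt_of_mul_lt_mul_left b1 hp.le
      have c2 := lt_of_mul_lt_mul_left b2 hp.le
      linarith
    · intro e
      have a := hb y0 hy0
      rw [abs_le] at a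
      have a1 : y0 - N * v 0 * v 1 ≤ K := by exact_mod_cast a.2
      have a2 : -(K : ℤ) ≤ y0 - N * v 0 * v 1 := by exact_mod_cast a.1
      refine ⟨y0, hy0, ?_, ?_⟩
      · rw [e]
        linarith
      · rw [e]
        linarith

theorem mulDef_of_pos (h : Ind α) (hβ : 0 < β)
    (hf : DfbF g (fun v : Fin 1 → ℤ => f (v 0)))
    (hfb : ∀ n : ℤ, |(f n : ℝ) - β * n * pr α n| ≤ 1) : MulDef g := by
  obtain ⟨X, hX, hX0⟩ := step6' h hβ hf hfb
  have h1 := double_mem h (by norm_num) hX0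
  have h2 := double_mem h (ρ := 2 * (1 / 22)) (by norm_num) (fun n _ hn => h1 n hn)
  have h3 := double_mem h (ρ := 2 * (2 * (1 / 22))) (by norm_num) (fun n _ hn => h2 n hn)
  have h4 := double_mem h (ρ := 2 * (2 * (2 * (1 / 22)))) (by norm_num) (fun n _ hn => h3 n hn)
  have hC := hX.double.double.double.double
  refine mulDef_of_CMul ?_
  have e : (fun n : ℤ => True) = _ := funext fun n =>
    (eq_true (h4 n ((er_abs n).trans_lt (by norm_num)))).symm
  rw [e]
  exact hC

end Mul

theorem undecidable (α β : ℝ) (hβ : β ≠ 0)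
    (hind : LinearIndependent ℚ ![(1 : ℝ), α, α ^ 2])
    (g : ℤ → ℤ) (hg : ∀ n : ℤ, g n = round (β * n * round (α * n))) :
    ¬ ComputablePred (fun c => c ∈ theoryCodes g) := by
  apply undecidable_of_mul
  have h := Ind.of_linearIndependent hind
  have hb : ∀ n : ℤ, |(g n : ℝ) - β * n * pr α n| ≤ 1 := by
    intro n
    rw [hg, abs_sub_comm]
    exact (abs_sub_round _).trans (by norm_num)
  have hgd : DfbF g (fun v : Fin 1 → ℤ => g (v 0)) := DfbF.g' (DfbF.var _)
  rcases lt_or_gt_of_ne hβ with hn | hp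
  · refine mulDef_of_pos (f := fun n => - g n) (β := -β) h (by linarith) hgd.neg fun n => ?_
    have := hb n
    rw [← abs_neg] at this
    convert this using 2
    push_cast
    ring
  · exact mulDef_of_pos h hp hgd hb

end Stmt0
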